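/- arXiv:1208.3229 — 5 statements merged into one kernel-verified Lean document; each statement's English description precedes it below -/
import Mathlib

section
/- Fix a prime power q. There exists a constant c > 0 such that for all sufficiently large n, the number D_q(n) of dynamical equivalence classes of affine-linear transformations of (F_q)^n satisfies log D_q(n) ≥ c·√n. -/
/-!
A map `p` of the index set induces the linear map `x ↦ x ∘ p` of `F ^ ι`, whose `k`-th iterate has
an image of size `q ^ #(range p^[k])` (`card_range_comp`). Image sizes of iterates are invariant
under dynamical equivalence (`DynEquiv.card_range_iterate`), so it suffices to find many maps `p`
with pairwise distinct sequences `k ↦ #(range p^[k])`.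

For `S ⊆ {0, …, m - 1}` take `m` rows of length `m + 1`; in each row `s ∈ S` let `p` shift the
initial segment `0, …, s + 1` one step towards `0` (fixing `0`), and let `p` fix everything else.
Then `p^[k]` misses exactly `∑ s ∈ S, min k (s + 1)` points, and the second difference of this
sequence in `k` is minus the indicator function of `S`. Since `m (m + 1) ≤ n` allows `m ≈ √n`, this
gives `D_q(n) ≥ 2 ^ m`.
-/

open Polynomial Filter

/-- Two self-maps (of possibly different sets) are *dynamically equivalent* if they are
conjugate by a bijection, i.e. their functional graphs are isomorphic. -/
def DynEquiv {X Y : Type*} (f : X → X) (g : Y → Y) : Prop :=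
  ∃ σ : X ≃ Y, ∀ x, σ (f x) = g (σ x)

/-- The set of affine-linear transformations of `(F_q)^n`, i.e. maps `x ↦ A x + b`. -/
def AffineMaps (F : Type*) [Field F] (n : ℕ) : Set ((Fin n → F) → (Fin n → F)) :=
  {T | ∃ (A : (Fin n → F) →ₗ[F] (Fin n → F)) (b : Fin n → F), T = fun x => A x + b}

/-- `Dq F n` is the number of dynamical equivalence classes of affine-linear
transformations of `(F_q)^n`, where `q = #F`. -/
noncomputable def Dq (F : Type*) [Field F] (n : ℕ) : ℕ :=
  Nat.card (Quot (fun T₁ T₂ : AffineMaps F n => DynEquiv T₁.1 T₂.1))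

/-- The self-map of an `m × (m + 1)` grid which, in each row `s ∈ S`, moves the points `0, …, s + 1`
one step towards the fixed point `0`, and which is the identity elsewhere. -/
def rowShift {m : ℕ} (S : Finset (Fin m)) (a : Fin m × Fin (m + 1)) : Fin m × Fin (m + 1) :=
  if a.1 ∈ S ∧ (a.2 : ℕ) ≤ a.1 + 1 then (a.1, ⟨a.2 - 1, by omega⟩) else a

lemma rowShift_iterate {m : ℕ} (S : Finset (Fin m)) (k : ℕ) (a : Fin m × Fin (m + 1)) :
    (rowShift S)^[k] a =
      if a.1 ∈ S ∧ (a.2 : ℕ) ≤ a.1 + 1 then (a.1, ⟨a.2 - k, by omega⟩) else a := by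
  induction k with
  | zero => simp
  | succ k ih =>
    rw [Function.iterate_succ_apply', ih]
    by_cases h : a.1 ∈ S ∧ (a.2 : ℕ) ≤ a.1 + 1
    · have h' : (a.2 : ℕ) - k ≤ a.1 + 1 := by omega
      simp [h, h', rowShift, Nat.sub_sub]
    · simp only [h, if_false, rowShift]

/-- The `k`-th iterate misses, in each row `s ∈ S`, the last `min k (s + 1)` points of the
segment `0, …, s + 1`. -/
lemma mem_range_rowShift_iterate {m : ℕ} (S : Finset (Fin m)) (k : ℕ) (a : Fin m × Fin (m + 1)) :
    a ∉ Set.range (rowShift S)^[k] ↔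
      a.1 ∈ S ∧ (a.1 : ℕ) + 1 - k < a.2 ∧ (a.2 : ℕ) ≤ a.1 + 1 := by
  obtain ⟨s, j⟩ := a
  rw [← not_iff_not, not_not]
  constructor
  · rintro ⟨⟨s', j'⟩, h⟩ ⟨hs, h1, h2⟩
    rw [rowShift_iterate] at h
    split_ifs at h with hc
    · obtain ⟨rfl, rfl⟩ := Prod.mk.inj h
      simp only at h1 hc
      omega
    · obtain ⟨rfl, rfl⟩ := Prod.mk.inj h
      exact hc ⟨hs, h2⟩
  · intro h
    by_cases hc : s ∈ S ∧ (j : ℕ) ≤ s + 1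
    · have h3 : (j : ℕ) ≤ s + 1 - k := by
        by_contra h4
        exact h ⟨hc.1, not_le.mp h4, hc.2⟩
      refine ⟨(s, ⟨min (j + k) (s + 1), by omega⟩), ?_⟩
      rw [rowShift_iterate, if_pos ⟨hc.1, min_le_right _ _⟩]
      ext
      · rfl
      · simp only
        omega
    · refine ⟨(s, j), ?_⟩
      rw [rowShift_iterate, if_neg hc]

lemma ncard_range_rowShift_iterate {m : ℕ} (S : Finset (Fin m)) (k : ℕ) :
    Nat.card (Set.range (rowShift S)^[k]) + ∑ s ∈ S, min k ((s : ℕ) + 1) = m * (m + 1) := by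
  classical
  have hcompl : (Set.range (rowShift S)^[k])ᶜ.ncard = ∑ s ∈ S, min k ((s : ℕ) + 1) := by
    have h1 : (Set.range (rowShift S)^[k])ᶜ = (S.sigma fun s : Fin m =>
        Finset.univ.filter fun j : Fin (m + 1) => (s : ℕ) + 1 - k < j ∧ (j : ℕ) ≤ s + 1).image
          (fun x : (Σ _ : Fin m, Fin (m + 1)) => (x.1, x.2)) := by
      ext a
      rw [Set.mem_compl_iff, mem_range_rowShift_iterate]
      simp only [Finset.coe_image, Set.mem_image, Finset.mem_coe, Finset.mem_sigma,
        Finset.mem_filter, Finset.mem_univ, true_and]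
      constructor
      · exact fun h => ⟨⟨a.1, a.2⟩, h, rfl⟩
      · rintro ⟨x, h, rfl⟩
        exact h
    rw [h1, Set.ncard_coe_finset, Finset.card_image_of_injective, Finset.card_sigma]
    · refine Finset.sum_congr rfl fun s _ => ?_
      have h2 : (Finset.univ.filter fun j : Fin (m + 1) =>
          (s : ℕ) + 1 - k < j ∧ (j : ℕ) ≤ s + 1).card =
            (Finset.Ioc ((s : ℕ) + 1 - k) (s + 1)).card := by
        rw [← Finset.card_map Fin.valEmbedding]
        congr 1
        ext j
        simp only [Finset.mem_map, Finset.mem_filter, Finset.mem_univ, true_and,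
          Fin.valEmbedding_apply, Finset.mem_Ioc]
        constructor
        · rintro ⟨i, hi, rfl⟩
          exact hi
        · exact fun hj => ⟨⟨j, by omega⟩, hj, rfl⟩
      rw [h2, Nat.card_Ioc]
      omega
    · rintro ⟨a, b⟩ ⟨c, d⟩ h
      obtain ⟨rfl, rfl⟩ := Prod.mk.inj h
      rfl
  rw [← hcompl, Nat.card_coe_set_eq, Set.ncard_add_ncard_compl]
  simp

/-- The sequence `k ↦ ∑ s ∈ S, min k (s + 1)` determines `S`: its second difference at `k` is
`-1` if `k ∈ S` and `0` otherwise. -/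
lemma eq_of_sum_min_eq {m : ℕ} {S S' : Finset (Fin m)}
    (h : ∀ k, ∑ s ∈ S, min k ((s : ℕ) + 1) = ∑ s ∈ S', min k ((s : ℕ) + 1)) : S = S' := by
  have key : ∀ (U : Finset (Fin m)) (t : Fin m),
      ∑ s ∈ U, min ((t : ℕ) + 2) ((s : ℕ) + 1) + ∑ s ∈ U, min (t : ℕ) ((s : ℕ) + 1)
        + (if t ∈ U then 1 else 0) = 2 * ∑ s ∈ U, min ((t : ℕ) + 1) ((s : ℕ) + 1) := by
    intro U t
    rw [← Finset.sum_ite_eq U t (fun _ => 1), ← Finset.sum_add_distrib,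
      ← Finset.sum_add_distrib, Finset.mul_sum]
    refine Finset.sum_congr rfl fun s _ => ?_
    have := @Fin.ext_iff m t s
    split_ifs <;> omega
  ext t
  have h1 := key S t
  have h2 := key S' t
  rw [h, h, h] at h1
  by_cases ht : t ∈ S <;> by_cases ht' : t ∈ S' <;> simp only [ht, ht', if_true, if_false] at * <;>
    omega

lemma card_range_comp (F : Type*) [Finite F] [Nonempty F] {ι : Type*} [Finite ι] (g : ι → ι) :
    Nat.card (Set.range fun x : ι → F => x ∘ g) = Nat.card F ^ Nat.card (Set.range g) := by
  classical
  rw [← Nat.card_fun]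
  have hinj : Function.Injective
      fun (y : Set.range g → F) => fun i => y ⟨g i, Set.mem_range_self i⟩ := by
    rintro y z h
    ext ⟨_, i, rfl⟩
    exact congrFun h i
  rw [← Nat.card_congr (Equiv.ofInjective _ hinj).symm]
  congr 2
  ext x
  constructor
  · rintro ⟨y, rfl⟩
    exact ⟨fun j => y j, rfl⟩
  · rintro ⟨y, rfl⟩
    refine ⟨fun j => if hj : j ∈ Set.range g then y ⟨j, hj⟩ else Classical.arbitrary F, ?_⟩
    ext i
    simp

lemma iterate_comp_right {F ι : Type*} (p : ι → ι) (k : ℕ) :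
    (fun x : ι → F => x ∘ p)^[k] = fun x => x ∘ p^[k] := by
  induction k with
  | zero => rfl
  | succ k ih =>
    rw [Function.iterate_succ', ih, Function.iterate_succ]
    rfl

lemma DynEquiv.card_range_iterate {X Y : Type*} {f : X → X} {g : Y → Y} (h : DynEquiv f g)
    (k : ℕ) : Nat.card (Set.range f^[k]) = Nat.card (Set.range g^[k]) := by
  obtain ⟨σ, hσ⟩ := h
  have hk : ∀ x, σ (f^[k] x) = g^[k] (σ x) := Function.Semiconj.iterate_right hσ k
  have himg : σ '' Set.range f^[k] = Set.range g^[k] := by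
    ext y
    constructor
    · rintro ⟨_, ⟨x, rfl⟩, rfl⟩
      exact ⟨σ x, (hk x).symm⟩
    · rintro ⟨z, rfl⟩
      exact ⟨_, ⟨σ.symm z, rfl⟩, by rw [hk, σ.apply_symm_apply]⟩
  rw [← himg]
  exact (Nat.card_image_of_injective σ.injective _).symm

/-- Image sizes of iterates of a self-map determine those of its extension by the identity. -/
lemma card_range_sumMap_iterate {α β : Type*} [Finite α] [Finite β] (p : α → α) (k : ℕ) :
    Nat.card (Set.range (Sum.map p (id : β → β))^[k]) =
      Nat.card (Set.range p^[k]) + Nat.card β := by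
  have h : (Sum.map p (id : β → β))^[k] = Sum.map p^[k] id := by
    induction k with
    | zero => simp
    | succ k ih => rw [Function.iterate_succ, ih, Sum.map_comp_map, Function.iterate_succ]; rfl
  have h2 : Set.range (Sum.map p^[k] (id : β → β)) =
      Sum.inl '' Set.range p^[k] ∪ Set.range Sum.inr := by
    ext (a | b) <;> simp
  rw [h, h2, Nat.card_coe_set_eq, Set.ncard_union_eq,
    Set.ncard_image_of_injective _ Sum.inl_injective, ← Nat.card_coe_set_eq,
    ← Nat.card_coe_set_eq, Nat.card_range_of_injective Sum.inr_injective]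
  rw [Set.disjoint_left]
  rintro _ ⟨a, _, rfl⟩ ⟨b, hb⟩
  exact Sum.inr_ne_inl hb

lemma two_pow_le_Dq (F : Type*) [Field F] [Fintype F] {m n : ℕ} (hmn : m * (m + 1) ≤ n) :
    2 ^ m ≤ Dq F n := by
  classical
  obtain ⟨r, rfl⟩ := Nat.exists_eq_add_of_le hmn
  let e : (Fin m × Fin (m + 1)) ⊕ Fin r ≃ Fin (m * (m + 1) + r) :=
    (Equiv.sumCongr finProdFinEquiv (Equiv.refl _)).trans finSumFinEquiv
  let p : Finset (Fin m) → Fin (m * (m + 1) + r) → Fin (m * (m + 1) + r) :=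
    fun S => e ∘ Sum.map (rowShift S) id ∘ e.symm
  have hp : ∀ S k, Nat.card (Set.range (p S)^[k]) = Nat.card (Set.range (rowShift S)^[k]) + r := by
    intro S k
    have he : DynEquiv (Sum.map (rowShift S) (id : Fin r → Fin r)) (p S) :=
      ⟨e, fun x => by simp [p]⟩
    rw [← he.card_range_iterate, card_range_sumMap_iterate, Nat.card_fin]
  let T : Finset (Fin m) → AffineMaps F (m * (m + 1) + r) := fun S =>
    ⟨fun x => x ∘ p S, LinearMap.funLeft F F (p S), 0, by ext x i; simp [LinearMap.funLeft_apply]⟩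
  let inv : Quot (fun T₁ T₂ : AffineMaps F (m * (m + 1) + r) => DynEquiv T₁.1 T₂.1) → ℕ → ℕ :=
    Quot.lift (fun U k => Nat.card (Set.range U.1^[k]))
      fun _ _ h => funext h.card_range_iterate
  have hinj : Function.Injective fun S => Quot.mk
      (fun T₁ T₂ : AffineMaps F (m * (m + 1) + r) => DynEquiv T₁.1 T₂.1) (T S) := by
    intro S S' h
    refine eq_of_sum_min_eq fun k => ?_
    have h1 : Nat.card (Set.range (fun x : _ → F => x ∘ p S)^[k]) =
        Nat.card (Set.range (fun x : _ → F => x ∘ p S')^[k]) := congrFun (congrArg inv h) k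
    rw [iterate_comp_right, iterate_comp_right, card_range_comp, card_range_comp] at h1
    have h2 := Nat.pow_right_injective (Finite.one_lt_card (α := F)) h1
    rw [hp, hp] at h2
    have h3 := ncard_range_rowShift_iterate S k
    have h4 := ncard_range_rowShift_iterate S' k
    omega
  have := Nat.card_le_card_of_injective _ hinj
  simpa [Dq] using this

/-- Lower bound: `log D_q(n) ≫ √n`. -/
theorem stmt0 (F : Type*) [Field F] [Fintype F] :
    ∃ c : ℝ, 0 < c ∧ ∀ᶠ n : ℕ in atTop, c * Real.sqrt n ≤ Real.log (Dq F n) := by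
  refine ⟨Real.log 2 / 3, by positivity, ?_⟩
  filter_upwards [eventually_ge_atTop 4] with n hn
  -- `m = ⌊√n⌋ - 1` satisfies `m (m + 1) ≤ n` and `√n ≤ 3 m` because `⌊√n⌋ ≥ 2`.
  have ht : 2 ≤ Nat.sqrt n := Nat.le_sqrt.mpr hn
  obtain ⟨m, hm⟩ : ∃ m, Nat.sqrt n = m + 1 := ⟨Nat.sqrt n - 1, by omega⟩
  have hmn : m * (m + 1) ≤ n := by
    have := Nat.sqrt_le n
    rw [hm] at this
    nlinarith
  have hsq : Real.sqrt n ≤ 3 * m := by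
    rw [Real.sqrt_le_left (by positivity)]
    have h1 : n < (m + 2) * (m + 2) := by simpa [hm] using Nat.lt_succ_sqrt n
    have h2 : n ≤ (3 * m) ^ 2 := by nlinarith
    exact_mod_cast h2
  have hD : ((2 : ℝ) ^ m) ≤ Dq F n := by exact_mod_cast two_pow_le_Dq F hmn
  calc Real.log 2 / 3 * Real.sqrt n ≤ Real.log 2 / 3 * (3 * m) := by gcongr
    _ = Real.log ((2 : ℝ) ^ m) := by rw [Real.log_pow]; ring
    _ ≤ Real.log (Dq F n) := Real.log_le_log (by positivity) hD
end

section
/- Fix a prime power q. There exists a constant C > 0 such that for all sufficiently large n, the number D_q(n) of dynamical equivalence classes of affine-linear transformations of (F_q)^n satisfies D_q(n) ≤ exp(C·n / log log n). -/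
/-!
The number of conjugacy classes of affine maps is exponential in `n`, but the dynamics sees much
less. The `F[X]`-module attached to the linear part splits as a product of cyclic modules
`F[X] ⧸ (f ^ e)` with `f` irreducible, so every affine map is a product of maps `y ↦ X y + b` of
such modules (`exists_decomposition`), and the dynamics of the product depends only on the dynamics
of the factors. A factor is determined up to dynamical equivalence by its *colour*: the degree `m`
of `f`, the exponent `e`, the order `d` of `X` modulo `f`, and whether there is a fixed point
(`dynEquiv_of_colour_eq`). Indeed:

* with a fixed point, the factor is conjugate to multiplication by `X`; if `X` is invertible, this
  is a permutation whose `k`-th power has `q ^ deg (gcd (f ^ e, X ^ k - 1))` fixed points, a number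
  depending only on `(m, e, d, k)`, and these numbers determine the cycle type;
* if `f ~ X` (encoded by `d = 0`), the module itself is determined by `e`;
* without a fixed point, `f ~ X - 1` and `b` is a unit, so that the factor is conjugate to
  `y ↦ X y + 1`.

Hence `D_q(n)` is at most the number of coloured partitions of `n` whose parts have size `m e` and
colour `(m, e, d, _)`, where `d = 0` or `d ∣ q ^ m - 1` (`Dq_le_card`). For every `s > 0` the
generating function at `exp (-s)` bounds this number (`Dq_le_exp`) by
`exp (s n + O(s⁻²) ∑ τ(q ^ m - 1) exp (-s m))`. By the divisor bound
`τ(q ^ m - 1) ≤ exp (C m / log m)`, the choice `s = 2 C / log y` with `y = log n / (2 log q)` makes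
the terms `m > y` geometrically small, while the terms `m ≤ y` are at most `q ^ y = √n` each. So the
exponent is `s n + n ^ (1 / 2 + o(1)) = O(n / log log n)`.
-/

open Polynomial Filter

/-! ### Permutations with the same numbers of periodic points -/

theorem minimalPeriod_eq_card_cycleOf {α : Type*} [Fintype α] [DecidableEq α]
    (σ : Equiv.Perm α) {x : α} (hx : σ x ≠ x) :
    Function.minimalPeriod σ x = (σ.cycleOf x).support.card := by
  have h := σ.isCycleOn_support_cycleOf x
  have hm : x ∈ (σ.cycleOf x).support := by
    rw [Equiv.Perm.mem_support_cycleOf_iff' hx]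
  have key : ∀ k, Function.IsPeriodicPt σ k x ↔ (σ.cycleOf x).support.card ∣ k := by
    intro k
    rw [← h.pow_apply_eq hm, Function.IsPeriodicPt, Function.IsFixedPt, Equiv.Perm.iterate_eq_pow]
  apply Nat.dvd_antisymm
  · exact ((key _).2 dvd_rfl).minimalPeriod_dvd
  · exact (key _).1 (Function.isPeriodicPt_minimalPeriod _ _)

/-- The `d`-cycles of `σ` partition the points of exact period `d`. This needs `d ≥ 2`, since
`cycleType` omits fixed points. -/
theorem count_cycleType_mul {α : Type*} [Fintype α] [DecidableEq α]
    (σ : Equiv.Perm α) {d : ℕ} (hd : 2 ≤ d) :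
    σ.cycleType.count d * d =
      (Finset.univ.filter fun x => Function.minimalPeriod σ x = d).card := by
  have hne : ∀ x, Function.minimalPeriod σ x = d → σ x ≠ x := by
    intro x hx h
    have : Function.minimalPeriod σ x = 1 := Function.minimalPeriod_eq_one_iff_isFixedPt.2 h
    omega
  rw [Equiv.Perm.cycleType_def, Multiset.count_map, ← Finset.filter_val, Finset.card_val]
  rw [Finset.card_eq_sum_card_fiberwise (f := fun x => σ.cycleOf x)
    (t := σ.cycleFactorsFinset.filter fun c => d = (Finset.card ∘ Equiv.Perm.support) c)]
  · rw [← smul_eq_mul, ← Finset.sum_const]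
    apply Finset.sum_congr rfl
    intro c hc
    simp only [Finset.mem_filter, Function.comp] at hc
    rw [hc.2]
    congr 1
    ext x
    simp only [Finset.mem_filter, Finset.mem_univ, true_and]
    constructor
    · intro hx
      have := Equiv.Perm.cycle_is_cycleOf hx hc.1
      refine ⟨?_, this.symm⟩
      have hx' : σ x ≠ x := by
        have := Equiv.Perm.mem_cycleFactorsFinset_support_le hc.1 hx
        simpa using this
      rw [minimalPeriod_eq_card_cycleOf σ hx', ← this]
    · rintro ⟨h1, rfl⟩
      rw [Equiv.Perm.mem_support_cycleOf_iff']
      exact hne x (by rw [h1, hc.2])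
  · intro x hx
    simp only [Finset.coe_filter, Finset.mem_univ, true_and, Set.mem_ofPred_eq] at hx
    simp only [Finset.coe_filter, Set.mem_ofPred_eq, Function.comp]
    refine ⟨?_, ?_⟩
    · rw [Equiv.Perm.cycleOf_mem_cycleFactorsFinset_iff, Equiv.Perm.mem_support]
      exact hne x hx
    · rw [← minimalPeriod_eq_card_cycleOf σ (hne x hx), hx]

theorem card_fixed_iterate {Z : Type*} [Fintype Z] (u : Z → Z) {k : ℕ} (hk : 0 < k) :
    Nat.card {x // u^[k] x = x} =
      ∑ d ∈ k.divisors, Nat.card {x // Function.minimalPeriod u x = d} := by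
  classical
  simp only [Nat.card_eq_fintype_card, Fintype.card_subtype]
  rw [Finset.card_eq_sum_card_fiberwise (f := fun x => Function.minimalPeriod u x)
    (t := k.divisors)]
  · apply Finset.sum_congr rfl
    intro d hd
    congr 1
    ext x
    simp only [Finset.mem_filter, Finset.mem_univ, true_and, and_iff_right_iff_imp]
    rintro rfl
    exact Function.isPeriodicPt_iff_minimalPeriod_dvd.2 (Nat.dvd_of_mem_divisors hd)
  · intro x hx
    simp only [Finset.coe_filter, Finset.mem_univ, true_and, Set.mem_ofPred_eq] at hx
    simp only [Finset.mem_coe, Nat.mem_divisors]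
    exact ⟨Function.isPeriodicPt_iff_minimalPeriod_dvd.1 hx, hk.ne'⟩

/-- The number of points of exact period `d` is determined, by induction on `d`, by the numbers
of solutions of `f^k x = x` for `k ≥ 1`. -/
theorem card_minimalPeriod_eq {X Y : Type*} [Fintype X] [Fintype Y] {f : X → X} {g : Y → Y}
    (h : ∀ k, 0 < k → Nat.card {x // f^[k] x = x} = Nat.card {y // g^[k] y = y}) :
    ∀ d, 0 < d → Nat.card {x // Function.minimalPeriod f x = d} =
      Nat.card {y // Function.minimalPeriod g y = d} := by
  intro d
  induction d using Nat.strong_induction_on with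
  | _ d ih =>
    intro hd
    have := h d hd
    rw [card_fixed_iterate f hd, card_fixed_iterate g hd, ← Nat.insert_self_properDivisors hd.ne',
      Finset.sum_insert Nat.self_notMem_properDivisors,
      Finset.sum_insert Nat.self_notMem_properDivisors] at this
    rw [Finset.sum_congr rfl (fun e he => ih e (Nat.mem_properDivisors.1 he).2
      (Nat.pos_of_mem_properDivisors he))] at this
    exact Nat.add_right_cancel this

/-- Two bijections of finite sets are conjugate as soon as all their positive iterates have
equally many fixed points. -/
theorem dynEquiv_of_card_fixed {X Y : Type*} [Finite X] [Finite Y] {f : X → X} {g : Y → Y}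
    (hf : Function.Bijective f) (hg : Function.Bijective g)
    (hXY : Nat.card X = Nat.card Y)
    (h : ∀ k, 0 < k → Nat.card {x // f^[k] x = x} = Nat.card {y // g^[k] y = y}) :
    DynEquiv f g := by
  classical
  have := Fintype.ofFinite X
  have := Fintype.ofFinite Y
  let ε : X ≃ Y := Fintype.equivOfCardEq (by simpa [Nat.card_eq_fintype_card] using hXY)
  let σ : Equiv.Perm X := Equiv.ofBijective f hf
  let τ : Equiv.Perm Y := Equiv.ofBijective g hg
  -- `cycleType` compares permutations of one set, so `g` is transported to `X` along `ε`.
  let τ' : Equiv.Perm X := ε.symm.permCongr τ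
  have hsemi : ∀ x, ε (τ' x) = τ (ε x) := by
    intro x; simp [τ', Equiv.permCongr_apply]
  have hmp : ∀ x, Function.minimalPeriod τ' x = Function.minimalPeriod τ (ε x) := by
    intro x
    rw [Function.minimalPeriod_eq_minimalPeriod_iff]
    intro k
    have hs : Function.Semiconj ε τ' τ := hsemi
    have := (hs.iterate_right k) x
    simp only [Function.IsPeriodicPt, Function.IsFixedPt]
    rw [← this, ε.injective.eq_iff]
  have hc : IsConj σ τ' := by
    rw [Equiv.Perm.isConj_iff_cycleType_eq]
    ext d
    by_cases hd : 2 ≤ d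
    · have h1 := count_cycleType_mul σ hd
      have h2 := count_cycleType_mul τ' hd
      have h3 := card_minimalPeriod_eq h d (by omega)
      have h4 : (Finset.univ.filter fun x => Function.minimalPeriod σ x = d).card =
          (Finset.univ.filter fun x => Function.minimalPeriod τ' x = d).card := by
        rw [← Fintype.card_subtype, ← Fintype.card_subtype, ← Nat.card_eq_fintype_card,
          ← Nat.card_eq_fintype_card]
        refine Eq.trans h3 (Nat.card_congr ?_)
        refine (ε.subtypeEquiv fun x => ?_).symm
        rw [hmp]; rfl
      exact Nat.eq_of_mul_eq_mul_right (by omega) (h1.trans (h4.trans h2.symm))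
    · rw [Multiset.count_eq_zero_of_notMem, Multiset.count_eq_zero_of_notMem] <;>
      exact fun hm => hd (Equiv.Perm.two_le_of_mem_cycleType hm)
  obtain ⟨c, hc⟩ := isConj_iff.1 hc
  refine ⟨c.trans ε, fun x => ?_⟩
  have h1 : τ' (c x) = c (σ x) := by rw [← hc]; simp
  change ε (c (σ x)) = τ (ε (c x))
  rw [← hsemi, h1]

/-! ### Fixed points of powers of `X` on `F[X] ⧸ (f ^ e)` -/

/-- The affine map `y ↦ X y + b` on the cyclic `F[X]`-module `F[X] ⧸ I`. -/
noncomputable def affMap {F : Type*} [Field F] (I : Ideal F[X]) (b : F[X] ⧸ I) :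
    F[X] ⧸ I → F[X] ⧸ I :=
  fun y => Ideal.Quotient.mk I X * y + b

theorem finite_quot {F : Type*} [Field F] [Finite F] {g : F[X]} (hg : g ≠ 0) :
    Finite (F[X] ⧸ Ideal.span {g}) := by
  have : Module.Finite F (AdjoinRoot g) := (AdjoinRoot.powerBasis hg).finite
  exact Module.finite_of_finite F (M := AdjoinRoot g)

theorem card_quot {F : Type*} [Field F] [Finite F] {g : F[X]} (hg : g ≠ 0) :
    Nat.card (F[X] ⧸ Ideal.span {g}) = Nat.card F ^ g.natDegree := by
  have : Module.Finite F (AdjoinRoot g) := (AdjoinRoot.powerBasis hg).finite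
  have h := Module.natCard_eq_pow_finrank (K := F) (V := AdjoinRoot g)
  rw [(AdjoinRoot.powerBasis hg).finrank, AdjoinRoot.powerBasis_dim] at h
  exact h

/-- On the finite ring `R ⧸ I`, the kernel and the cokernel of multiplication by `c` have the
same size, and the cokernel is `R ⧸ (I + (c))`. -/
theorem card_annihilator {R : Type*} [CommRing R] (I : Ideal R) [Finite (R ⧸ I)] (c : R) :
    Nat.card {y : R ⧸ I // Ideal.Quotient.mk I c * y = 0} =
      Nat.card (R ⧸ (I ⊔ Ideal.span {c})) := by
  let φ : R ⧸ I →+ R ⧸ I := AddMonoidHom.mulLeft (Ideal.Quotient.mk I c)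
  have h1 : Nat.card (R ⧸ I) = Nat.card φ.ker * φ.ker.index := φ.ker.card_mul_index.symm
  have h2 : φ.ker.index = Nat.card φ.range := AddSubgroup.index_ker φ
  have h3 : Nat.card (R ⧸ I) = Nat.card φ.range * φ.range.index := φ.range.card_mul_index.symm
  have h4 : Nat.card φ.ker = φ.range.index := by
    have hpos : 0 < Nat.card φ.range := Nat.card_pos
    rw [h2] at h1
    rw [h1, mul_comm] at h3
    exact Nat.eq_of_mul_eq_mul_left hpos h3
  have h5 : φ.range = (Submodule.toAddSubgroup ((Ideal.span {c}).map (Ideal.Quotient.mk I))) := by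
    ext y
    rw [Ideal.map_span, Set.image_singleton]
    simp only [AddMonoidHom.mem_range, Submodule.mem_toAddSubgroup, Ideal.mem_span_singleton',
      φ, AddMonoidHom.coe_mulLeft]
    exact ⟨fun ⟨a, ha⟩ => ⟨a, by rw [mul_comm, ha]⟩, fun ⟨a, ha⟩ => ⟨a, by rw [mul_comm, ha]⟩⟩
  have h6 : Nat.card (R ⧸ (I ⊔ Ideal.span {c})) = φ.range.index := by
    rw [h5]
    exact Nat.card_congr (DoubleQuot.quotQuotEquivQuotSup I (Ideal.span {c})).symm.toEquiv
  rw [h6, ← h4]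
  exact Nat.card_congr (Equiv.refl _)

theorem affMap_iterate {F : Type*} [Field F] (I : Ideal F[X]) (k : ℕ) (y : F[X] ⧸ I) :
    (affMap I 0)^[k] y = Ideal.Quotient.mk I (X ^ k) * y := by
  induction k with
  | zero => simp
  | succ k ih => rw [Function.iterate_succ_apply', ih, affMap, add_zero, ← mul_assoc, ← map_mul,
      pow_succ']

theorem card_fixed_affMap {F : Type*} [Field F] [Finite F] {g : F[X]} (hg : g ≠ 0) (k : ℕ) :
    Nat.card {y // (affMap (Ideal.span {g}) 0)^[k] y = y} =
      Nat.card (F[X] ⧸ (Ideal.span {g} ⊔ Ideal.span {X ^ k - 1})) := by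
  have := finite_quot hg
  rw [← card_annihilator]
  refine Nat.card_congr (Equiv.subtypeEquivRight fun y => ?_)
  rw [affMap_iterate, map_sub, map_one, sub_mul, one_mul, sub_eq_zero]

/-- `gcd (f ^ e, f ^ v u) = f ^ min e v` for `u` prime to `f`, in terms of ideals. -/
theorem span_sup_of_pow_mul {F : Type*} [Field F] {f u : F[X]}
    (hu : IsCoprime f u) (e v : ℕ) :
    Ideal.span {f ^ e} ⊔ Ideal.span {f ^ v * u} = Ideal.span {f ^ min e v} := by
  apply le_antisymm
  · rw [sup_le_iff, Ideal.span_singleton_le_span_singleton, Ideal.span_singleton_le_span_singleton]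
    exact ⟨pow_dvd_pow _ (min_le_left _ _), (pow_dvd_pow _ (min_le_right _ _)).mul_right _⟩
  · rw [Ideal.span_singleton_le_iff_mem, ← Ideal.span_union, Set.singleton_union,
      Ideal.mem_span_pair]
    obtain ⟨a, b, hab⟩ := (hu.pow_left (m := e - v) : IsCoprime (f ^ (e - v)) u)
    rcases le_total e v with h | h
    · exact ⟨1, 0, by simp [min_eq_left h]⟩
    · refine ⟨a, b, ?_⟩
      rw [min_eq_right h]
      have : f ^ e = f ^ v * f ^ (e - v) := by rw [← pow_add]; congr 1; omega
      conv_rhs => rw [← mul_one (f ^ v), ← hab]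
      rw [this]
      ring

theorem mk_pow_eq_one_iff {F : Type*} [Field F] (f : F[X]) (k : ℕ) :
    orderOf (Ideal.Quotient.mk (Ideal.span {f}) X) ∣ k ↔ f ∣ X ^ k - 1 := by
  rw [orderOf_dvd_iff_pow_eq_one, ← map_pow, ← map_one (Ideal.Quotient.mk (Ideal.span {f})),
    Ideal.Quotient.eq, Ideal.mem_span_singleton]

/-- If `X` is a unit modulo the irreducible `f`, its order divides `q ^ deg f - 1`. -/
theorem order_dvd {F : Type*} [Field F] [Finite F] {f : F[X]} (hf : Irreducible f)
    (hd : orderOf (Ideal.Quotient.mk (Ideal.span {f}) X) ≠ 0) :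
    orderOf (Ideal.Quotient.mk (Ideal.span {f}) X) ∣ Nat.card F ^ f.natDegree - 1 := by
  have := finite_quot hf.ne_zero
  have : (Ideal.span {f}).IsMaximal := PrincipalIdealRing.isMaximal_of_irreducible hf
  let _ : Field (F[X] ⧸ Ideal.span {f}) := Ideal.Quotient.field _
  let _ := Fintype.ofFinite (F[X] ⧸ Ideal.span {f})
  rw [← card_quot hf.ne_zero, Nat.card_eq_fintype_card, orderOf_dvd_iff_pow_eq_one]
  apply FiniteField.pow_card_sub_one_eq_one
  intro h0
  rw [h0] at hd
  exact hd (orderOf_eq_zero_iff.2 (by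
    rw [isOfFinOrder_iff_pow_eq_one]
    rintro ⟨n, hn, h⟩
    rw [zero_pow hn.ne'] at h
    exact zero_ne_one h))

/-- For `f` irreducible with `X` of order `d ≠ 0` modulo `f`, the polynomial `X ^ k - 1` is prime
to `f` if `d ∤ k`, and otherwise it is exactly divisible by `f ^ p ^ v_p(k)`, because
`X ^ k - 1 = (X ^ k' - 1) ^ p ^ v_p(k)` with `X ^ k' - 1` squarefree. -/
theorem exists_coprime_factor {F : Type*} [Field F] [Finite F] (p : ℕ) [Fact p.Prime] [CharP F p]
    {f : F[X]} (hf : Irreducible f)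
    (hd : orderOf (Ideal.Quotient.mk (Ideal.span {f}) X) ≠ 0) {k : ℕ} (hk : 0 < k) :
    ∃ u, IsCoprime f u ∧ X ^ k - 1 =
      f ^ (if orderOf (Ideal.Quotient.mk (Ideal.span {f}) X) ∣ k
        then p ^ k.factorization p else 0) * u := by
  have hp : p.Prime := Fact.out
  split_ifs with h
  · set d := orderOf (Ideal.Quotient.mk (Ideal.span {f}) X) with hdd
    set a := k.factorization p
    set k' := k / p ^ a
    have hkk : p ^ a * k' = k := Nat.ordProj_mul_ordCompl_eq_self k p
    have hk' : ¬ p ∣ k' := Nat.not_dvd_ordCompl hp hk.ne'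
    have hdvd : d ∣ k' := by
      -- `d` divides `q ^ deg f - 1`, which is prime to `p`.
      have hcop : Nat.Coprime d (p ^ a) := by
        apply Nat.Coprime.pow_right
        rw [Nat.coprime_comm, hp.coprime_iff_not_dvd]
        intro hpd
        have h1 := hpd.trans (order_dvd hf hd)
        have h2 : p ∣ Nat.card F ^ f.natDegree := by
          apply dvd_pow _ hf.natDegree_pos.ne'
          have := Fintype.ofFinite F
          rw [Nat.card_eq_fintype_card]
          obtain ⟨n, hn⟩ := FiniteField.card F p
          rw [hn.2]
          exact dvd_pow_self _ n.2.ne'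
        have h3 : 0 < Nat.card F ^ f.natDegree := pow_pos Nat.card_pos _
        have := (Nat.dvd_sub_iff_right h3 h2).1 h1
        exact hp.one_lt.ne' (Nat.dvd_one.1 this)
      rw [← hkk] at h
      exact hcop.dvd_of_dvd_mul_left h
    obtain ⟨u, hu⟩ := (mk_pow_eq_one_iff f k').1 hdvd
    have hsep : (X ^ k' - 1 : F[X]).Separable := by
      rw [X_pow_sub_one_separable_iff]
      rwa [Ne, CharP.cast_eq_zero_iff F p]
    -- A separable product has coprime factors.
    have hcop : IsCoprime f u := by
      rw [hu] at hsep
      exact hsep.isCoprime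
    refine ⟨u ^ p ^ a, hcop.pow_right, ?_⟩
    rw [← mul_pow, ← hu, sub_pow_char_pow, one_pow, ← pow_mul, mul_comm, hkk]
  · refine ⟨X ^ k - 1, ?_, by simp⟩
    rw [mk_pow_eq_one_iff] at h
    exact (hf.coprime_iff_not_dvd).2 h

theorem card_fixed_affMap_pow {F : Type*} [Field F] [Finite F] (p : ℕ) [Fact p.Prime] [CharP F p]
    {f : F[X]} (hf : Irreducible f) (e : ℕ)
    (hd : orderOf (Ideal.Quotient.mk (Ideal.span {f}) X) ≠ 0) {k : ℕ} (hk : 0 < k) :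
    Nat.card {y // (affMap (Ideal.span {f ^ e}) 0)^[k] y = y} =
      Nat.card F ^ (min e (if orderOf (Ideal.Quotient.mk (Ideal.span {f}) X) ∣ k
        then p ^ k.factorization p else 0) * f.natDegree) := by
  obtain ⟨u, hu, h⟩ := exists_coprime_factor p hf hd hk
  rw [card_fixed_affMap (pow_ne_zero _ hf.ne_zero), h, span_sup_of_pow_mul hu,
    card_quot (pow_ne_zero _ hf.ne_zero), natDegree_pow]

/-! ### Dynamics of the cyclic factors -/

theorem DynEquiv.symm {X Y : Type*} {f : X → X} {g : Y → Y} (h : DynEquiv f g) :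
    DynEquiv g f := by
  obtain ⟨σ, h⟩ := h
  refine ⟨σ.symm, fun y => ?_⟩
  rw [Equiv.symm_apply_eq, h, Equiv.apply_symm_apply]

theorem DynEquiv.trans {X Y Z : Type*} {f : X → X} {g : Y → Y} {k : Z → Z}
    (h : DynEquiv f g) (h' : DynEquiv g k) : DynEquiv f k := by
  obtain ⟨σ, h⟩ := h
  obtain ⟨τ, h'⟩ := h'
  exact ⟨σ.trans τ, fun x => by simp [h, h']⟩

theorem DynEquiv.refl {X : Type*} (f : X → X) : DynEquiv f f := ⟨Equiv.refl X, fun _ => rfl⟩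

theorem affMap_dynEquiv_linear {F : Type*} [Field F] (I : Ideal F[X]) {b y : F[X] ⧸ I}
    (hy : affMap I b y = y) : DynEquiv (affMap I b) (affMap I 0) := by
  refine ⟨Equiv.subRight y, fun x => ?_⟩
  simp only [affMap, Equiv.subRight_apply] at hy ⊢
  linear_combination hy

theorem affMap_one_dynEquiv {F : Type*} [Field F] (I : Ideal F[X]) {b : F[X] ⧸ I}
    (hb : IsUnit b) : DynEquiv (affMap I 1) (affMap I b) := by
  obtain ⟨u, rfl⟩ := hb
  refine ⟨u.mulLeft, fun x => ?_⟩
  simp only [affMap, Units.mulLeft_apply]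
  ring

theorem isUnit_mk_pow {F : Type*} [Field F] {f c : F[X]} (e : ℕ) (h : IsCoprime f c) :
    IsUnit (Ideal.Quotient.mk (Ideal.span {f ^ e}) c) := by
  obtain ⟨a, b, hab⟩ := (h.pow_left (m := e) : IsCoprime (f ^ e) c)
  refine IsUnit.of_mul_eq_one (Ideal.Quotient.mk _ b) ?_
  rw [← map_mul, ← map_one (Ideal.Quotient.mk _), Ideal.Quotient.eq, Ideal.mem_span_singleton]
  exact ⟨-a, by linear_combination hab⟩

theorem span_eq_of_dvd_irreducible {F : Type*} [Field F] {f g : F[X]} (hf : Irreducible f)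
    (hg : Irreducible g) (h : f ∣ g) (e : ℕ) : Ideal.span {f ^ e} = Ideal.span {g ^ e} := by
  rw [Ideal.span_singleton_eq_span_singleton]
  exact (hf.associated_of_dvd hg h).pow_pow

/-- An affine map `y ↦ X y + b` of `F[X] ⧸ (f ^ e)` without fixed point can only occur for
`f ~ X - 1`, and then `b` is a unit, so that the map is conjugate to `y ↦ X y + 1`. -/
theorem affMap_no_fixed {F : Type*} [Field F] {f : F[X]} (hf : Irreducible f) {e : ℕ}
    {b : F[X] ⧸ Ideal.span {f ^ e}} (hb : ¬ ∃ y, affMap _ b y = y) :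
    Ideal.span {f ^ e} = Ideal.span {(X - C 1 : F[X]) ^ e} ∧ IsUnit b := by
  have hdvd : f ∣ X - C 1 := by
    by_contra hn
    obtain ⟨u, hu⟩ := isUnit_mk_pow e ((hf.coprime_iff_not_dvd).2 hn)
    apply hb
    refine ⟨-(↑u⁻¹ * b), ?_⟩
    have h1 : (u : F[X] ⧸ Ideal.span {f ^ e}) * ↑u⁻¹ = 1 := u.mul_inv
    rw [hu, map_sub, map_one, map_one] at h1
    simp only [affMap]
    linear_combination -b * h1
  refine ⟨span_eq_of_dvd_irreducible hf (irreducible_X_sub_C 1) hdvd e, ?_⟩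
  obtain ⟨g, rfl⟩ := Ideal.Quotient.mk_surjective b
  apply isUnit_mk_pow e
  rw [hf.coprime_iff_not_dvd]
  intro hfg
  obtain ⟨c, rfl⟩ := ((hf.associated_of_dvd (irreducible_X_sub_C 1) hdvd).dvd_iff_dvd_left).1 hfg
  apply hb
  refine ⟨-Ideal.Quotient.mk _ c, ?_⟩
  simp only [affMap, map_mul, map_sub, map_one]
  ring

/-- As `orderOf` is `0` at elements of infinite order, `X` has order `0` modulo `f` exactly when
`f ~ X`. -/
theorem order_ne_zero_iff {F : Type*} [Field F] [Finite F] {f : F[X]} (hf : Irreducible f) :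
    orderOf (Ideal.Quotient.mk (Ideal.span {f}) X) ≠ 0 ↔ IsCoprime f X := by
  have := finite_quot hf.ne_zero
  constructor
  · intro h
    have h1 := (mk_pow_eq_one_iff f _).1 (dvd_refl _)
    rw [hf.coprime_iff_not_dvd]
    intro hX
    refine hf.not_isUnit (isUnit_of_dvd_one ?_)
    have h2 := dvd_pow hX h
    have := dvd_sub h2 h1
    rwa [sub_sub_cancel] at this
  · intro h
    have h1 := isUnit_mk_pow 1 h
    rw [pow_one] at h1
    obtain ⟨u, hu⟩ := h1
    rw [← hu, orderOf_units]
    have : Finite (F[X] ⧸ Ideal.span {f})ˣ := inferInstance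
    exact (orderOf_pos u).ne'

open Classical in
/-- The colour of the affine map `y ↦ X y + b` of `F[X] ⧸ (f ^ e)`: the degree of `f`, the
exponent `e`, the order of `X` modulo `f` (which is `0` when `f ~ X`), and whether the map has a
fixed point. -/
noncomputable def colour {F : Type*} [Field F] (f : F[X]) (e : ℕ)
    (b : F[X] ⧸ Ideal.span {f ^ e}) : ℕ × ℕ × ℕ × Bool :=
  (f.natDegree, e, orderOf (Ideal.Quotient.mk (Ideal.span {f}) X),
    decide (∃ y, affMap _ b y = y))

/-- The colour of a cyclic factor determines its dynamics. -/
theorem dynEquiv_of_colour_eq {F : Type*} [Field F] [Finite F] {f₁ f₂ : F[X]}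
    (h₁ : Irreducible f₁) (h₂ : Irreducible f₂) {e₁ e₂ : ℕ} (b₁ : F[X] ⧸ Ideal.span {f₁ ^ e₁})
    (b₂ : F[X] ⧸ Ideal.span {f₂ ^ e₂}) (h : colour f₁ e₁ b₁ = colour f₂ e₂ b₂) :
    DynEquiv (affMap _ b₁) (affMap _ b₂) := by
  classical
  simp only [colour, Prod.mk.injEq, decide_eq_decide] at h
  obtain ⟨hm, rfl, hd, hfix⟩ := h
  have hId : ∀ {I J : Ideal F[X]}, I = J → DynEquiv (affMap I 0) (affMap J 0) ∧
      DynEquiv (affMap I 1) (affMap J 1) := by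
    rintro I J rfl
    exact ⟨DynEquiv.refl _, DynEquiv.refl _⟩
  by_cases hy : ∃ y, affMap _ b₁ y = y
  · obtain ⟨y₁, hy₁⟩ := hy
    obtain ⟨y₂, hy₂⟩ := hfix.1 ⟨y₁, hy₁⟩
    refine (affMap_dynEquiv_linear _ hy₁).trans (DynEquiv.trans ?_
      (affMap_dynEquiv_linear _ hy₂).symm)
    by_cases hd0 : orderOf (Ideal.Quotient.mk (Ideal.span {f₁}) X) = 0
    · have hX : ∀ {f : F[X]}, Irreducible f →
          orderOf (Ideal.Quotient.mk (Ideal.span {f}) X) = 0 →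
          Ideal.span {f ^ e₁} = Ideal.span {X ^ e₁} := by
        intro f hf h0
        refine span_eq_of_dvd_irreducible hf irreducible_X ?_ e₁
        by_contra hn
        exact (order_ne_zero_iff hf).2 (hf.coprime_iff_not_dvd.2 hn) h0
      exact (hId ((hX h₁ hd0).trans (hX h₂ (hd ▸ hd0)).symm)).1
    · obtain ⟨p, hp⟩ := CharP.exists F
      have : Fact p.Prime := ⟨CharP.char_is_prime F p⟩
      have hbij : ∀ {f : F[X]}, Irreducible f →
          orderOf (Ideal.Quotient.mk (Ideal.span {f}) X) ≠ 0 →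
          Function.Bijective (affMap (Ideal.span {f ^ e₁}) 0) := by
        intro f hf h0
        obtain ⟨u, hu⟩ := isUnit_mk_pow e₁ ((order_ne_zero_iff hf).1 h0)
        convert u.mulLeft.bijective using 1
        ext y
        simp [affMap, hu]
      have := finite_quot (pow_ne_zero e₁ h₁.ne_zero)
      have := finite_quot (pow_ne_zero e₁ h₂.ne_zero)
      refine dynEquiv_of_card_fixed (hbij h₁ hd0) (hbij h₂ (hd ▸ hd0)) ?_ fun k hk => ?_
      · rw [card_quot (pow_ne_zero e₁ h₁.ne_zero), card_quot (pow_ne_zero e₁ h₂.ne_zero),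
          natDegree_pow, natDegree_pow, hm]
      · rw [card_fixed_affMap_pow p h₁ e₁ hd0 hk, card_fixed_affMap_pow p h₂ e₁ (hd ▸ hd0) hk,
          hd, hm]
  · obtain ⟨hI, hu⟩ := affMap_no_fixed h₁ hy
    obtain ⟨hI', hu'⟩ := affMap_no_fixed h₂ (fun h => hy (hfix.2 h))
    exact (affMap_one_dynEquiv _ hu).symm.trans
      ((hId (hI.trans hI'.symm)).2.trans (affMap_one_dynEquiv _ hu'))

/-! ### Reduction to coloured partitions -/

theorem DynEquiv.pi {ι κ : Type*} {X : ι → Type*} {Y : κ → Type*} {f : ∀ i, X i → X i}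
    {g : ∀ j, Y j → Y j} (τ : ι ≃ κ) (h : ∀ i, DynEquiv (f i) (g (τ i))) :
    DynEquiv (fun (y : ∀ i, X i) i => f i (y i)) (fun (y : ∀ j, Y j) j => g j (y j)) := by
  choose σ hσ using h
  refine ⟨Equiv.piCongr τ σ, fun y => ?_⟩
  ext j
  obtain ⟨i, rfl⟩ := τ.surjective j
  rw [Equiv.piCongr_apply_apply]
  beta_reduce
  rw [Equiv.piCongr_apply_apply, hσ]

/-- Factors living on a one-point set can be dropped from a product. -/
theorem DynEquiv.pi_subtype {ι : Type*} {X : ι → Type*} (f : ∀ i, X i → X i) (P : ι → Prop)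
    (h : ∀ i, ¬ P i → Subsingleton (X i)) [∀ i, Nonempty (X i)] :
    DynEquiv (fun (y : ∀ i, X i) i => f i (y i))
      (fun (y : ∀ i : {i // P i}, X i) i => f i (y i)) := by
  classical
  refine ⟨Equiv.ofBijective (fun y i => y i.1) ⟨fun y z hyz => ?_, fun z => ?_⟩, fun y => rfl⟩
  · ext i
    by_cases hi : P i
    · exact congrFun hyz ⟨i, hi⟩
    · exact (h i hi).elim _ _
  · refine ⟨fun i => if hi : P i then z ⟨i, hi⟩ else Classical.arbitrary _, ?_⟩
    ext i
    simp [i.2]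

universe u

/-- An affine transformation is a product of affine maps `y ↦ X y + b_i` of cyclic modules
`F[X] ⧸ (p_i ^ e_i)`: this is the primary decomposition of the `F[X]`-module defined by its
linear part. -/
theorem exists_decomposition {F : Type u} [Field F] [Finite F] {n : ℕ}
    {T : (Fin n → F) → (Fin n → F)} (hT : T ∈ AffineMaps F n) :
    ∃ (ι : Type u) (_ : Fintype ι) (p : ι → F[X]) (e : ι → ℕ)
      (b : ∀ i, F[X] ⧸ Ideal.span {p i ^ e i}),
      (∀ i, Irreducible (p i)) ∧ (∀ i, e i ≠ 0) ∧ ∑ i, (p i).natDegree * e i = n ∧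
      DynEquiv T (fun y i => affMap _ (b i) (y i)) := by
  classical
  obtain ⟨A, b, rfl⟩ := hT
  obtain ⟨ι, _, p, hp, e, ⟨φ⟩⟩ := Module.equiv_directSum_of_isTorsion
    (R := F[X]) (M := Module.AEval' A)
    (Module.AEval.isTorsion_of_finiteDimensional _ _ _)
  let ψ := φ.trans (DirectSum.linearEquivFunOnFintype F[X] ι fun i => F[X] ⧸ F[X] ∙ p i ^ e i)
  let c : ∀ i, F[X] ⧸ Ideal.span {p i ^ e i} := ψ (Module.AEval'.of A b)
  have hdyn : DynEquiv (fun x => A x + b)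
      (fun (y : ∀ i, F[X] ⧸ Ideal.span {p i ^ e i}) i => affMap _ (c i) (y i)) := by
    refine ⟨(Module.AEval'.of A).toEquiv.trans ψ.toEquiv, fun x => ?_⟩
    have h1 : ψ (Module.AEval'.of A (A x + b)) =
        (X : F[X]) • ψ (Module.AEval'.of A x) + ψ (Module.AEval'.of A b) := by
      rw [map_add, map_add, ← Module.AEval'.X_smul_of, map_smul]
    refine h1.trans ?_
    ext i
    rfl
  have hcard : ∑ i, (p i).natDegree * e i = n := by
    have h1 : Nat.card (Fin n → F) = Nat.card (∀ i, F[X] ⧸ Ideal.span {p i ^ e i}) :=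
      Nat.card_congr ((Module.AEval'.of A).toEquiv.trans ψ.toEquiv)
    rw [Nat.card_pi, Nat.card_pi] at h1
    simp only [Finset.prod_const, Finset.card_univ, Fintype.card_fin] at h1
    rw [Finset.prod_congr rfl fun i _ => card_quot (pow_ne_zero (e i) (hp i).ne_zero),
      Finset.prod_pow_eq_pow_sum] at h1
    rw [Nat.pow_right_injective Finite.one_lt_card h1]
    exact Finset.sum_congr rfl fun i _ => by rw [natDegree_pow, mul_comm]
  -- Exponents `e i = 0` give trivial modules, which are dropped.
  refine ⟨{i // e i ≠ 0}, inferInstance, fun i => p i, fun i => e i, fun i => c i,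
    fun i => hp i, fun i => i.2, ?_, hdyn.trans (DynEquiv.pi_subtype _ _ fun i hi => ?_)⟩
  · rw [← hcard, ← Finset.sum_subtype (Finset.univ.filter fun i => e i ≠ 0) (by simp)
      (fun i => (p i).natDegree * e i)]
    refine Finset.sum_filter_of_ne fun i _ h h0 => h ?_
    rw [h0, mul_zero]
  · rw [Ideal.Quotient.subsingleton_iff]
    rw [not_not] at hi
    simp [hi, Ideal.span_singleton_one]

/-- A finite set containing the colours that occur for transformations of a space of dimension `n`
over a field with `Q` elements: degree and exponent lie between `1` and `n`, and the order of `X`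
is either `0`, for `f ~ X`, or a divisor of `Q ^ m - 1`. -/
def colours (Q n : ℕ) : Finset (ℕ × ℕ × ℕ × Bool) :=
  (Finset.Icc 1 n).biUnion fun m =>
    {m} ×ˢ Finset.Icc 1 n ×ˢ insert 0 (Q ^ m - 1).divisors ×ˢ Finset.univ

theorem one_le_weight {Q n : ℕ} {c : ℕ × ℕ × ℕ × Bool} (hc : c ∈ colours Q n) :
    1 ≤ c.1 * c.2.1 := by
  simp only [colours, Finset.mem_biUnion, Finset.mem_product, Finset.mem_singleton,
    Finset.mem_Icc] at hc
  obtain ⟨m, ⟨hm, -⟩, hcm, ⟨he, -⟩, -⟩ := hc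
  exact Nat.mul_pos (hcm ▸ hm) he

theorem colour_mem {F : Type*} [Field F] [Finite F] {f : F[X]} (hf : Irreducible f) {e n : ℕ}
    (he : e ≠ 0) (hn : f.natDegree * e ≤ n) (b : F[X] ⧸ Ideal.span {f ^ e}) :
    colour f e b ∈ colours (Nat.card F) n := by
  have hm := hf.natDegree_pos
  have he' := Nat.pos_of_ne_zero he
  simp only [colours, colour, Finset.mem_biUnion, Finset.mem_product, Finset.mem_singleton,
    Finset.mem_Icc, Finset.mem_insert, Nat.mem_divisors, Finset.mem_univ, and_true]
  refine ⟨f.natDegree, ⟨hm, (Nat.le_mul_of_pos_right _ he').trans hn⟩, rfl,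
    ⟨he', (Nat.le_mul_of_pos_left _ hm).trans hn⟩, ?_⟩
  by_cases hd : orderOf (Ideal.Quotient.mk (Ideal.span {f}) X) = 0
  · exact Or.inl hd
  · refine Or.inr ⟨order_dvd hf hd, ?_⟩
    have := Nat.one_lt_pow hm.ne' (Finite.one_lt_card (α := F))
    omega

/-- The dynamical class of an affine transformation is determined by its number of cyclic factors
of each colour, so there are at most as many classes as coloured partitions. -/
theorem Dq_le_card {F : Type u} [Field F] [Finite F] (n : ℕ) :
    Dq F n ≤ Nat.card {h : colours (Nat.card F) n → Fin (n + 1) //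
      ∑ c, c.1.1 * c.1.2.1 * (h c : ℕ) ≤ n} := by
  classical
  have hΦ : ∀ T : AffineMaps F n, ∃ h : {h : colours (Nat.card F) n → Fin (n + 1) //
      ∑ c, c.1.1 * c.1.2.1 * (h c : ℕ) ≤ n}, ∃ (ι : Type u) (_ : Fintype ι) (p : ι → F[X])
      (e : ι → ℕ) (b : ∀ i, F[X] ⧸ Ideal.span {p i ^ e i}) (col : ι → colours (Nat.card F) n),
      (∀ i, Irreducible (p i)) ∧ (∀ i, (col i).1 = colour (p i) (e i) (b i)) ∧
      DynEquiv T.1 (fun y i => affMap _ (b i) (y i)) ∧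
      ∀ c, (h.1 c : ℕ) = Fintype.card {i // col i = c} := by
    intro T
    obtain ⟨ι, _, p, e, b, hp, he, hsum, hdyn⟩ := exists_decomposition T.2
    have hle : ∀ i, (p i).natDegree * e i ≤ n := fun i => by
      rw [← hsum]
      exact Finset.single_le_sum (f := fun i => (p i).natDegree * e i)
        (fun _ _ => Nat.zero_le _) (Finset.mem_univ i)
    let col : ι → colours (Nat.card F) n := fun i =>
      ⟨colour (p i) (e i) (b i), colour_mem (hp i) (he i) (hle i) (b i)⟩
    have htot : ∑ c : colours (Nat.card F) n, c.1.1 * c.1.2.1 * Fintype.card {i // col i = c} = n := by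
      refine Eq.trans ?_ hsum
      rw [← Finset.sum_fiberwise Finset.univ col]
      refine Finset.sum_congr rfl fun c _ => ?_
      rw [Fintype.card_subtype, mul_comm, ← smul_eq_mul, ← Finset.sum_const]
      refine Finset.sum_congr rfl fun i hi => ?_
      rw [← (Finset.mem_filter.1 hi).2]
      rfl
    have hlt : ∀ c, Fintype.card {i // col i = c} < n + 1 := by
      intro c
      rw [Nat.lt_succ_iff]
      rcases Nat.eq_zero_or_pos (Fintype.card {i // col i = c}) with h0 | h0
      · omega
      · obtain ⟨i, hi⟩ := Fintype.card_pos_iff.1 h0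
        have h1 : 0 < c.1.1 * c.1.2.1 := by
          rw [← hi]
          exact Nat.mul_pos (hp i).natDegree_pos (Nat.pos_of_ne_zero (he i))
        calc _ ≤ c.1.1 * c.1.2.1 * Fintype.card {i // col i = c} := Nat.le_mul_of_pos_left _ h1
          _ ≤ ∑ c : colours (Nat.card F) n, c.1.1 * c.1.2.1 * Fintype.card {i // col i = c} :=
            Finset.single_le_sum (f := fun c : colours (Nat.card F) n =>
              c.1.1 * c.1.2.1 * Fintype.card {i // col i = c})
              (fun _ _ => Nat.zero_le _) (Finset.mem_univ c)
          _ = n := htot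
    exact ⟨⟨fun c => ⟨_, hlt c⟩, htot.le⟩, ι, inferInstance, p, e, b, col, hp, fun _ => rfl, hdyn,
      fun _ => rfl⟩
  choose Φ hΦ using hΦ
  refine Nat.card_le_card_of_injective (fun q => Φ q.out) fun q₁ q₂ h => ?_
  rw [← Quot.out_eq q₁, ← Quot.out_eq q₂]
  apply Quot.sound
  obtain ⟨ι, _, p, e, b, col, hp, hcol, hdyn, hc⟩ := hΦ q₁.out
  obtain ⟨ι', _, p', e', b', col', hp', hcol', hdyn', hc'⟩ := hΦ q₂.out
  have hfib : ∀ c, Nonempty ({i // col i = c} ≃ {i // col' i = c}) := by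
    intro c
    refine ⟨Fintype.equivOfCardEq ?_⟩
    rw [← hc, ← hc']
    exact congrArg (fun x : Fin (n + 1) => (x : ℕ)) (congrFun (congrArg Subtype.val h) c)
  let ε := fun c => (hfib c).some
  refine hdyn.trans (DynEquiv.trans (DynEquiv.pi (Equiv.ofFiberEquiv ε) fun i => ?_) hdyn'.symm)
  apply dynEquiv_of_colour_eq (hp _) (hp' _)
  rw [← hcol, ← hcol']
  exact congrArg Subtype.val (Equiv.ofFiberEquiv_map ε i).symm

/-! ### Counting coloured partitions -/

theorem geom_tail_le {r : ℝ} (h0 : 0 ≤ r) (h1 : r < 1) (n : ℕ) :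
    ∑ j ∈ Finset.Icc 1 n, r ^ j ≤ r * (1 - r)⁻¹ := by
  have h : ∑ j ∈ Finset.Icc 1 n, r ^ j = r * ∑ j ∈ Finset.range n, r ^ j := by
    induction n with
    | zero => simp
    | succ n ih =>
      rw [Finset.sum_Icc_succ_top (by omega), ih, Finset.sum_range_succ]
      ring
  rw [h]
  apply mul_le_mul_of_nonneg_left _ h0
  rw [← tsum_geometric_of_lt_one h0 h1]
  exact (summable_geometric_of_lt_one h0 h1).sum_le_tsum _ fun _ _ => pow_nonneg h0 _

/-- Chernoff-type bound for the number of coloured partitions of integers at most `n`, where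
the part `i` has size `w i`. -/
theorem card_partitions_le {ι : Type*} [Fintype ι] (w : ι → ℕ) (hw : ∀ i, 1 ≤ w i) (n : ℕ)
    {s : ℝ} (hs : 0 < s) :
    (Nat.card {h : ι → Fin (n + 1) // ∑ i, w i * (h i : ℕ) ≤ n} : ℝ) ≤
      Real.exp (s * n + (1 - Real.exp (-s))⁻¹ * ∑ i, Real.exp (-(s * w i))) := by
  classical
  have hr : ∀ i, Real.exp (-(s * w i)) ≤ Real.exp (-s) := fun i => by
    apply Real.exp_le_exp.2
    have : (1 : ℝ) ≤ w i := by exact_mod_cast hw i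
    nlinarith
  have hs1 : Real.exp (-s) < 1 := by rw [Real.exp_lt_one_iff]; linarith
  rw [Nat.card_eq_fintype_card, Fintype.card_subtype, Finset.card_eq_sum_ones]
  push_cast
  calc ∑ h : ι → Fin (n + 1) with ∑ i, w i * (h i : ℕ) ≤ n, (1 : ℝ)
      ≤ ∑ h : ι → Fin (n + 1) with ∑ i, w i * (h i : ℕ) ≤ n,
          Real.exp (s * n) * ∏ i, Real.exp (-(s * w i)) ^ (h i : ℕ) := by
        -- `exp (s (n - ∑ w h)) ≥ 1` on the set being counted.
        refine Finset.sum_le_sum fun h hh => ?_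
        have hh' : ((∑ i, w i * (h i : ℕ) : ℕ) : ℝ) ≤ n := by
          exact_mod_cast (Finset.mem_filter.1 hh).2
        simp_rw [← Real.exp_nat_mul]
        rw [← Real.exp_sum, ← Real.exp_add, Real.one_le_exp_iff]
        have : ∑ i, ((h i : ℕ) : ℝ) * -(s * w i) = -(s * ((∑ i, w i * (h i : ℕ) : ℕ) : ℝ)) := by
          push_cast
          rw [Finset.mul_sum, ← Finset.sum_neg_distrib]
          exact Finset.sum_congr rfl fun i _ => by ring
        rw [this]
        nlinarith
    _ ≤ ∑ h : ι → Fin (n + 1), Real.exp (s * n) * ∏ i, Real.exp (-(s * w i)) ^ (h i : ℕ) :=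
        Finset.sum_le_sum_of_subset_of_nonneg (Finset.filter_subset _ _)
          fun _ _ _ => by positivity
    _ = Real.exp (s * n) * ∏ i, ∑ j : Fin (n + 1), Real.exp (-(s * w i)) ^ (j : ℕ) := by
        rw [← Finset.mul_sum, Finset.prod_univ_sum, Fintype.piFinset_univ]
    _ ≤ Real.exp (s * n) *
          ∏ i, Real.exp ((1 - Real.exp (-s))⁻¹ * Real.exp (-(s * w i))) := by
        refine mul_le_mul_of_nonneg_left (Finset.prod_le_prod (fun _ _ => by positivity)
          fun i _ => ?_) (Real.exp_pos _).le
        rw [Fin.sum_univ_eq_sum_range fun j => Real.exp (-(s * w i)) ^ j]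
        have h1 := (hr i).trans_lt hs1
        have h0 := (Real.exp_pos (-(s * w i))).le
        have hgeom : ∑ j ∈ Finset.range (n + 1), Real.exp (-(s * w i)) ^ j ≤
            (1 - Real.exp (-(s * w i)))⁻¹ := by
          rw [← tsum_geometric_of_lt_one h0 h1]
          exact (summable_geometric_of_lt_one h0 h1).sum_le_tsum _ fun _ _ => pow_nonneg h0 _
        refine hgeom.trans ?_
        have h2 : (1 - Real.exp (-(s * w i)))⁻¹ =
            (1 - Real.exp (-(s * w i)))⁻¹ * Real.exp (-(s * w i)) + 1 := by
          have : 1 - Real.exp (-(s * w i)) ≠ 0 := by linarith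
          field_simp
          ring
        rw [h2]
        refine (Real.add_one_le_exp _).trans (Real.exp_le_exp.2 ?_)
        refine mul_le_mul_of_nonneg_right ?_ h0
        exact inv_anti₀ (by linarith) (by linarith [hr i])
    _ = _ := by rw [← Real.exp_sum, ← Real.exp_add, Finset.mul_sum]

/-- Summing over the exponent `e` gives a geometric series, and each degree `m` admits at most
`2 (τ(Q ^ m - 1) + 1) ≤ 4 τ(Q ^ m - 1)` pairs of an order and a fixed-point flag. -/
theorem sum_colours_le {Q : ℕ} (hQ : 2 ≤ Q) (n : ℕ) {s : ℝ} (hs : 0 < s) :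
    ∑ c ∈ colours Q n, Real.exp (-(s * ((c.1 * c.2.1 : ℕ) : ℝ))) ≤
      4 * (1 - Real.exp (-s))⁻¹ *
        ∑ m ∈ Finset.Icc 1 n, ((Q ^ m - 1).divisors.card : ℝ) * Real.exp (-(s * m)) := by
  have hs1 : Real.exp (-s) < 1 := by rw [Real.exp_lt_one_iff]; linarith
  rw [colours, Finset.sum_biUnion]
  · rw [Finset.mul_sum]
    refine Finset.sum_le_sum fun m hm => ?_
    have hm1 : 1 ≤ m := (Finset.mem_Icc.1 hm).1
    have hm1' : (1 : ℝ) ≤ m := by exact_mod_cast hm1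
    rw [Finset.sum_product, Finset.sum_singleton, Finset.sum_product]
    have hne : Q ^ m - 1 ≠ 0 := by
      have := Nat.one_lt_pow (by omega : m ≠ 0) (by omega : 1 < Q)
      omega
    have hτ : (1 : ℝ) ≤ (Q ^ m - 1).divisors.card := by
      exact_mod_cast Finset.card_pos.2 (Nat.nonempty_divisors.2 hne)
    set τ := (Q ^ m - 1).divisors.card
    have hcard : ((insert 0 (Q ^ m - 1).divisors ×ˢ (Finset.univ : Finset Bool)).card : ℝ) ≤
        4 * τ := by
      rw [Finset.card_product, Finset.card_univ, Fintype.card_bool]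
      have : ((insert 0 (Q ^ m - 1).divisors).card : ℝ) ≤ τ + 1 := by
        exact_mod_cast Finset.card_insert_le _ _
      push_cast
      linarith
    have hr : Real.exp (-(s * m)) ≤ Real.exp (-s) := Real.exp_le_exp.2 (by nlinarith)
    simp only [Finset.sum_const, nsmul_eq_mul]
    rw [← Finset.mul_sum]
    have hgeom : ∑ e ∈ Finset.Icc 1 n, Real.exp (-(s * ((m * e : ℕ) : ℝ))) ≤
        Real.exp (-(s * m)) * (1 - Real.exp (-s))⁻¹ := by
      calc _ = ∑ e ∈ Finset.Icc 1 n, Real.exp (-(s * m)) ^ e := by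
            refine Finset.sum_congr rfl fun e _ => ?_
            rw [← Real.exp_nat_mul]
            congr 1
            push_cast
            ring
        _ ≤ Real.exp (-(s * m)) * (1 - Real.exp (-(s * m)))⁻¹ :=
            geom_tail_le (Real.exp_pos _).le (hr.trans_lt hs1) n
        _ ≤ _ := mul_le_mul_of_nonneg_left (inv_anti₀ (by linarith) (by linarith))
            (Real.exp_pos _).le
    calc _ ≤ 4 * (τ : ℝ) * (Real.exp (-(s * m)) * (1 - Real.exp (-s))⁻¹) := by
          apply mul_le_mul hcard hgeom _ (by positivity)
          exact Finset.sum_nonneg fun _ _ => (Real.exp_pos _).le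
      _ = _ := by ring
  · intro m _ m' _ hmm
    rw [Function.onFun, Finset.disjoint_left]
    intro c hc hc'
    rw [Finset.mem_product, Finset.mem_singleton] at hc hc'
    exact hmm (hc.1.symm.trans hc'.1)

/-- The bound on `D_q(n)` provided by the generating function evaluated at `exp (-s)`. -/
theorem Dq_le_exp {F : Type u} [Field F] [Finite F] (n : ℕ) {s : ℝ} (hs : 0 < s) :
    (Dq F n : ℝ) ≤ Real.exp (s * n + 4 * (1 - Real.exp (-s))⁻¹ ^ 2 *
      ∑ m ∈ Finset.Icc 1 n,
        ((Nat.card F ^ m - 1).divisors.card : ℝ) * Real.exp (-(s * m))) := by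
  have h1 : (Dq F n : ℝ) ≤ _ := Nat.cast_le.2 (Dq_le_card (F := F) n)
  have hw : ∀ c : colours (Nat.card F) n, 1 ≤ c.1.1 * c.1.2.1 := fun c => one_le_weight c.2
  refine (h1.trans (card_partitions_le _ hw n hs)).trans (Real.exp_le_exp.2 ?_)
  have h2 := sum_colours_le (Finite.one_lt_card (α := F)) n hs
  rw [← Finset.sum_coe_sort] at h2
  have hs1 : Real.exp (-s) < 1 := by rw [Real.exp_lt_one_iff]; linarith
  have h3 : 0 ≤ (1 - Real.exp (-s))⁻¹ := inv_nonneg.2 (by linarith)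
  have h4 := mul_le_mul_of_nonneg_left h2 h3
  refine (add_le_add_right h4 (s * n)).trans (le_of_eq ?_)
  ring

/-! ### The divisor bound -/

/-- Elementary divisor bound with a free threshold `z`: prime factors up to `z` contribute at most
`log (log₂ N + 1)` each, and a prime `p > z` of multiplicity `v` contributes
`log (v + 1) ≤ v ≤ v log p / log z`. -/
theorem log_card_divisors_le {N : ℕ} (hN : N ≠ 0) {z : ℝ} (hz : 1 < z) :
    Real.log N.divisors.card ≤
      z * Real.log (Real.log N / Real.log 2 + 1) + Real.log N / Real.log z := by
  have hlogz := Real.log_pos hz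
  have hlog2 : 0 < Real.log 2 := Real.log_pos (by norm_num)
  have hN1 : (1 : ℝ) ≤ N := by exact_mod_cast Nat.one_le_iff_ne_zero.2 hN
  have hlogN : 0 ≤ Real.log N := Real.log_nonneg hN1
  set L := Real.log (Real.log N / Real.log 2 + 1) with hL
  have hL0 : 0 ≤ L := Real.log_nonneg (by
    have : 0 ≤ Real.log N / Real.log 2 := by positivity
    linarith)
  rw [Nat.card_divisors hN]
  push_cast
  rw [Real.log_prod (fun p _ => by positivity)]
  have hterm : ∀ p ∈ N.primeFactors, Real.log ((N.factorization p : ℝ) + 1) ≤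
      (if (p : ℝ) ≤ z then L else 0) + N.factorization p * Real.log p / Real.log z := by
    intro p hp
    have hpp : p.Prime := Nat.prime_of_mem_primeFactors hp
    have hp2 : (2 : ℝ) ≤ p := by exact_mod_cast hpp.two_le
    have hlogp : Real.log 2 ≤ Real.log p := Real.log_le_log (by norm_num) hp2
    split_ifs with h
    · have h1 : (N.factorization p : ℝ) ≤ Real.log N / Real.log 2 := by
        rw [le_div_iff₀ hlog2]
        have h2 : ((2 : ℝ) ^ N.factorization p) ≤ N := by
          calc (2 : ℝ) ^ N.factorization p ≤ (p : ℝ) ^ N.factorization p := by gcongr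
            _ ≤ N := by exact_mod_cast Nat.ordProj_le p hN
        have := Real.log_le_log (by positivity) h2
        rwa [Real.log_pow] at this
      have h2 : Real.log ((N.factorization p : ℝ) + 1) ≤ L :=
        Real.log_le_log (by positivity) (by linarith)
      have h3 : 0 ≤ (N.factorization p : ℝ) * Real.log p / Real.log z :=
        div_nonneg (mul_nonneg (Nat.cast_nonneg _) (by linarith)) hlogz.le
      linarith
    · rw [zero_add, le_div_iff₀ hlogz]
      have h1 : Real.log ((N.factorization p : ℝ) + 1) ≤ N.factorization p := by
        have := Real.log_le_sub_one_of_pos (x := (N.factorization p : ℝ) + 1) (by positivity)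
        linarith
      have h2 : Real.log z ≤ Real.log p := Real.log_le_log (by linarith) (not_le.1 h).le
      exact mul_le_mul h1 h2 hlogz.le (Nat.cast_nonneg _)
  refine (Finset.sum_le_sum hterm).trans ?_
  rw [Finset.sum_add_distrib]
  apply add_le_add
  · rw [← Finset.sum_filter, Finset.sum_const, nsmul_eq_mul]
    refine mul_le_mul_of_nonneg_right ?_ hL0
    have hsub : (N.primeFactors.filter fun p : ℕ => (p : ℝ) ≤ z) ⊆ Finset.Icc 1 ⌊z⌋₊ := by
      intro p hp
      rw [Finset.mem_filter] at hp
      rw [Finset.mem_Icc]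
      exact ⟨(Nat.prime_of_mem_primeFactors hp.1).one_lt.le, Nat.le_floor hp.2⟩
    have h1 := Finset.card_le_card hsub
    rw [Nat.card_Icc, Nat.add_sub_cancel] at h1
    exact (Nat.cast_le.2 h1).trans (Nat.floor_le (by linarith))
  · rw [← Finset.sum_div]
    apply le_of_eq
    congr 1
    rw [Real.log_nat_eq_sum_factorization]
    rfl

/-- The divisor bound for `Q ^ m - 1`, whose logarithm is at most `m log Q`. -/
theorem exists_divisor_bound {Q : ℕ} (hQ : 2 ≤ Q) :
    ∃ C : ℝ, 0 < C ∧ ∀ᶠ m : ℕ in atTop,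
      ((Q ^ m - 1).divisors.card : ℝ) ≤ Real.exp (C * m / Real.log m) := by
  have hQ2 : (2 : ℝ) ≤ Q := by exact_mod_cast hQ
  have hlogQ : 0 < Real.log Q := Real.log_pos (by linarith)
  have hlog2 : 0 < Real.log 2 := Real.log_pos (by norm_num)
  refine ⟨1 + 2 * Real.log Q, by positivity, ?_⟩
  have hsqrt : Tendsto (fun m : ℕ => Real.sqrt m) atTop atTop :=
    Real.tendsto_sqrt_atTop.comp tendsto_natCast_atTop_atTop
  have hlittle : ∀ᶠ m : ℕ in atTop, 8 * Real.log (Real.sqrt m) ^ 2 ≤ Real.sqrt m := by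
    have h := ((Real.isLittleO_pow_log_id_atTop (n := 2)).comp_tendsto hsqrt).bound
      (by norm_num : (0 : ℝ) < 1 / 8)
    filter_upwards [h] with m hm
    simp only [Function.comp, id, Real.norm_eq_abs] at hm
    rw [abs_of_nonneg (by positivity), abs_of_nonneg (by positivity)] at hm
    linarith
  filter_upwards [hlittle, eventually_ge_atTop 2,
    tendsto_natCast_atTop_atTop.eventually_ge_atTop (Real.log Q / Real.log 2 + 1)]
    with m h1 h2 h3
  have hm2 : (2 : ℝ) ≤ m := by exact_mod_cast h2
  have hlogm : 0 < Real.log m := Real.log_pos (by linarith)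
  have hlt : 1 < Q ^ m := Nat.one_lt_pow (by omega) (by omega)
  have hN : Q ^ m - 1 ≠ 0 := by omega
  have hpos : (0 : ℝ) < (Q ^ m - 1).divisors.card := by
    exact_mod_cast Finset.card_pos.2 (Nat.nonempty_divisors.2 hN)
  have hz : 1 < Real.sqrt m := by rw [Real.lt_sqrt] <;> linarith
  -- The threshold `√m` makes the small primes negligible, at the cost of a factor `2` in the
  -- contribution of the large ones.
  have key := log_card_divisors_le hN hz
  have hlogsq : Real.log (Real.sqrt m) = Real.log m / 2 := Real.log_sqrt (by linarith)
  have hlogN : Real.log ((Q ^ m - 1 : ℕ) : ℝ) ≤ m * Real.log Q := by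
    rw [← Real.log_pow]
    apply Real.log_le_log
    · exact_mod_cast Nat.pos_of_ne_zero hN
    · exact_mod_cast Nat.sub_le _ _
  have hlogN0 : 0 ≤ Real.log ((Q ^ m - 1 : ℕ) : ℝ) :=
    Real.log_nonneg (by exact_mod_cast Nat.one_le_iff_ne_zero.2 hN)
  have hinner : Real.log (Real.log ((Q ^ m - 1 : ℕ) : ℝ) / Real.log 2 + 1) ≤
      2 * Real.log m := by
    have : (2 : ℝ) * Real.log m = Real.log ((m : ℝ) ^ 2) := by rw [Real.log_pow]; norm_num
    rw [this]
    have h0 : 0 ≤ Real.log ((Q ^ m - 1 : ℕ) : ℝ) / Real.log 2 := by positivity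
    apply Real.log_le_log (by linarith)
    have h4 : Real.log ((Q ^ m - 1 : ℕ) : ℝ) / Real.log 2 ≤
        m * (Real.log Q / Real.log 2) := by
      rw [← mul_div_assoc]
      gcongr
    nlinarith
  have hfirst : Real.sqrt m * (2 * Real.log m) ≤ m / Real.log m := by
    rw [le_div_iff₀ hlogm]
    have h5 : Real.sqrt m * Real.sqrt m = m := Real.mul_self_sqrt (by linarith)
    rw [hlogsq] at h1
    nlinarith [Real.sqrt_nonneg m]
  rw [← Real.log_le_iff_le_exp hpos]
  rw [hlogsq] at key
  calc _ ≤ _ := key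
    _ ≤ Real.sqrt m * (2 * Real.log m) + m * Real.log Q / (Real.log m / 2) := by gcongr
    _ ≤ m / Real.log m + m * Real.log Q / (Real.log m / 2) := by gcongr
    _ = _ := by field_simp

theorem inv_one_sub_exp_le {s : ℝ} (h0 : 0 < s) (h1 : s ≤ 1) :
    (1 - Real.exp (-s))⁻¹ ≤ 2 / s := by
  have h : Real.exp (-s) ≤ 1 - s / 2 := by
    have h2 : Real.exp (-s) * Real.exp s = 1 := by rw [← Real.exp_add]; simp
    have h3 := Real.add_one_le_exp s
    have h4 := Real.exp_pos (-s)
    nlinarith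
  rw [← inv_div]
  exact inv_anti₀ (by positivity) (by linarith)

/-- Up to `y`, the trivial bound `τ(Q ^ m - 1) ≤ Q ^ m` is used; beyond `y` the factor `exp (-s m)`
with `s = 2 C / log y` absorbs the divisor bound. -/
theorem sum_divisors_le {Q : ℕ} (hQ : 2 ≤ Q) {C y : ℝ} (hC : 0 < C) (hy : 1 < y)
    (hbound : ∀ m : ℕ, y < m →
      ((Q ^ m - 1).divisors.card : ℝ) ≤ Real.exp (C * m / Real.log m))
    (hs : 2 * C / Real.log y ≤ 1) (n : ℕ) :
    ∑ m ∈ Finset.Icc 1 n, ((Q ^ m - 1).divisors.card : ℝ) *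
      Real.exp (-(2 * C / Real.log y * m)) ≤
      y * Real.exp (y * Real.log Q) + 2 * Real.log y / C := by
  have hl := Real.log_pos hy
  have hQ2 : (2 : ℝ) ≤ Q := by exact_mod_cast hQ
  have hlogQ : 0 < Real.log Q := Real.log_pos (by linarith)
  set s := 2 * C / Real.log y with hsdef
  have hs0 : 0 < s := by positivity
  have hterm : ∀ m ∈ Finset.Icc 1 n, ((Q ^ m - 1).divisors.card : ℝ) * Real.exp (-(s * m)) ≤
      (if (m : ℝ) ≤ y then Real.exp (y * Real.log Q) else 0) + Real.exp (-(s / 2)) ^ m := by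
    intro m hm
    split_ifs with h
    · have h1 : ((Q ^ m - 1).divisors.card : ℝ) ≤ Real.exp (y * Real.log Q) := by
        calc ((Q ^ m - 1).divisors.card : ℝ) ≤ ((Q ^ m : ℕ) : ℝ) := by
              exact_mod_cast (Nat.card_divisors_le_self _).trans (Nat.sub_le _ _)
          _ = Real.exp (m * Real.log Q) := by
              rw [Real.exp_nat_mul, Real.exp_log (by linarith)]
              push_cast
              rfl
          _ ≤ _ := by gcongr
      have h2 : Real.exp (-(s * m)) ≤ 1 := by
        rw [Real.exp_le_one_iff, neg_nonpos]
        positivity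
      have h3 : 0 ≤ Real.exp (-(s / 2)) ^ m := by positivity
      have h4 := mul_le_mul h1 h2 (Real.exp_pos _).le (Real.exp_pos _).le
      linarith
    · rw [zero_add]
      push Not at h
      refine (mul_le_mul_of_nonneg_right (hbound m h) (Real.exp_pos _).le).trans ?_
      rw [← Real.exp_add, ← Real.exp_nat_mul, Real.exp_le_exp]
      have h1 : Real.log y ≤ Real.log m := Real.log_le_log (by linarith) h.le
      have h2 : C * m / Real.log m ≤ C * m / Real.log y := by
        gcongr
      have h3 : C * m / Real.log y = s * m / 2 := by rw [hsdef]; ring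
      linarith
  refine (Finset.sum_le_sum hterm).trans ?_
  rw [Finset.sum_add_distrib]
  apply add_le_add
  · rw [← Finset.sum_filter, Finset.sum_const, nsmul_eq_mul]
    refine mul_le_mul_of_nonneg_right ?_ (Real.exp_pos _).le
    have hsub : ((Finset.Icc 1 n).filter fun m : ℕ => (m : ℝ) ≤ y) ⊆ Finset.Icc 1 ⌊y⌋₊ := by
      intro m hm
      rw [Finset.mem_filter, Finset.mem_Icc] at hm
      rw [Finset.mem_Icc]
      exact ⟨hm.1.1, Nat.le_floor hm.2⟩
    have h1 := Finset.card_le_card hsub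
    rw [Nat.card_Icc, Nat.add_sub_cancel] at h1
    exact (Nat.cast_le.2 h1).trans (Nat.floor_le (by linarith))
  · have hr1 : Real.exp (-(s / 2)) < 1 := by rw [Real.exp_lt_one_iff]; linarith
    refine (geom_tail_le (Real.exp_pos _).le hr1 n).trans ?_
    have h1 : (1 - Real.exp (-(s / 2)))⁻¹ ≤ 2 / (s / 2) :=
      inv_one_sub_exp_le (by linarith) (by linarith)
    have h2 : 0 ≤ (1 - Real.exp (-(s / 2)))⁻¹ := inv_nonneg.2 (by linarith)
    calc _ ≤ 1 * (1 - Real.exp (-(s / 2)))⁻¹ := by gcongr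
      _ ≤ 2 / (s / 2) := by rw [one_mul]; exact h1
      _ = 2 * Real.log y / C := by rw [hsdef]; field_simp

/-! ### Choice of parameters -/

/-- The contribution of the generating function is negligible. It is applied with `x = log n`,
`ll = log log n`, `R = √n`, `l = log y`, `I` the geometric factor and `S` the divisor sum. -/
theorem error_term_le {C x y l R n S I ll : ℝ} (hC : 0 < C) (hx : 1 ≤ x) (hyx : y ≤ x)
    (hlx : l ≤ x) (hR : 1 ≤ R) (hRR : R * R = n) (hll : 0 < ll) (hllx : ll ≤ x)
    (hB : 4 / C ^ 2 * (1 + 2 / C) * x ^ 5 ≤ R) (hI0 : 0 ≤ I) (hI : I ≤ x / C) (hS0 : 0 ≤ S)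
    (hS : S ≤ y * R + 2 * l / C) : 4 * I ^ 2 * S ≤ n / ll := by
  have hxR : x * 1 ≤ x * R := mul_le_mul_of_nonneg_left hR (by linarith)
  have e1 : y * R ≤ x * R := mul_le_mul_of_nonneg_right hyx (by linarith)
  have e2 : l ≤ x * R := by linarith
  have e3 : S ≤ x * R * (1 + 2 / C) := by
    calc S ≤ x * R + 2 * (x * R) / C := by
          refine hS.trans (add_le_add e1 ?_)
          gcongr
      _ = _ := by ring
  rw [le_div_iff₀ hll]
  calc 4 * I ^ 2 * S * ll ≤ 4 * (x / C) ^ 2 * (x * R * (1 + 2 / C)) * x := by gcongr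
    _ = 4 / C ^ 2 * (1 + 2 / C) * x ^ 4 * R := by ring
    _ ≤ 4 / C ^ 2 * (1 + 2 / C) * x ^ 5 * R := by
        gcongr 4 / C ^ 2 * (1 + 2 / C) * ?_ * R
        exact pow_le_pow_right₀ hx (by norm_num)
    _ ≤ R * R := by gcongr
    _ = n := hRR

/-- Upper bound: `D_q(n) ≤ exp(C n / log log n)` for large `n`. -/
theorem stmt1 (F : Type*) [Field F] [Fintype F] :
    ∃ C : ℝ, 0 < C ∧ ∀ᶠ n : ℕ in atTop,
      (Dq F n : ℝ) ≤ Real.exp (C * n / Real.log (Real.log n)) := by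
  set Q := Nat.card F
  have hQ : 2 ≤ Q := Finite.one_lt_card (α := F)
  have hQ2 : (2 : ℝ) ≤ Q := by exact_mod_cast hQ
  have hlog2 : (1 : ℝ) / 2 < Real.log 2 := by linarith [Real.log_two_gt_d9]
  have hlogQ : Real.log 2 ≤ Real.log Q := Real.log_le_log (by norm_num) hQ2
  obtain ⟨C, hC, hev⟩ := exists_divisor_bound hQ
  obtain ⟨M, hM⟩ := eventually_atTop.1 hev
  refine ⟨4 * C + 1, by positivity, ?_⟩
  have hlog : Tendsto (fun n : ℕ => Real.log n) atTop atTop :=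
    Real.tendsto_log_atTop.comp tendsto_natCast_atTop_atTop
  have hloglog : Tendsto (fun n : ℕ => Real.log (Real.log n)) atTop atTop :=
    Real.tendsto_log_atTop.comp hlog
  have hsqrt : Tendsto (fun n : ℕ => Real.sqrt n) atTop atTop :=
    Real.tendsto_sqrt_atTop.comp tendsto_natCast_atTop_atTop
  set B := 4 / C ^ 2 * (1 + 2 / C) with hB
  have hB0 : 0 < B := by positivity
  have hlittle : ∀ᶠ n : ℕ in atTop, B * Real.log n ^ 5 ≤ Real.sqrt n := by
    have h := ((Real.isLittleO_pow_log_id_atTop (n := 5)).comp_tendsto hsqrt).bound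
      (by positivity : (0 : ℝ) < (B * 32)⁻¹)
    filter_upwards [h, eventually_ge_atTop 1] with n hn hn1
    have hn1' : (1 : ℝ) ≤ n := by exact_mod_cast hn1
    have h0 := Real.log_nonneg hn1'
    simp only [Function.comp, id, Real.norm_eq_abs] at hn
    rw [Real.log_sqrt (by linarith), abs_of_nonneg (by positivity),
      abs_of_nonneg (by positivity), ← div_eq_inv_mul, le_div_iff₀ (by positivity)] at hn
    calc B * Real.log n ^ 5 = (Real.log n / 2) ^ 5 * (B * 32) := by ring
      _ ≤ _ := hn
  filter_upwards [hlittle, hlog.eventually_ge_atTop (2 * Real.log Q * (M + 2)),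
    hlog.eventually_ge_atTop 1, hloglog.eventually_ge_atTop 1,
    hloglog.eventually_ge_atTop (2 * Real.log (2 * Real.log Q)),
    hloglog.eventually_ge_atTop (4 * C)] with n h1 h2 h3 h4 h5 h6
  have hn0 : (0 : ℝ) < n := by
    rcases Nat.eq_zero_or_pos n with rfl | h
    · simp at h3; linarith
    · exact_mod_cast h
  set x := Real.log n with hx
  -- This choice of `y` makes `Q ^ y = √n`.
  set y := x / (2 * Real.log Q) with hy
  have hyM : (M : ℝ) + 2 ≤ y := by
    rw [hy, le_div_iff₀ (by linarith)]
    linarith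
  have hM0 : (0 : ℝ) ≤ M := Nat.cast_nonneg _
  have hyx : y ≤ x := div_le_self (by linarith) (by linarith)
  have hl : Real.log y = Real.log x - Real.log (2 * Real.log Q) :=
    Real.log_div (by linarith) (by linarith)
  set l := Real.log y with hldef
  have hl2 : Real.log x / 2 ≤ l := by linarith
  have hl0 : 0 < l := by linarith
  have hlx : l ≤ x := (Real.log_le_self (by linarith)).trans hyx
  set s := 2 * C / l with hs
  have hs0 : 0 < s := by positivity
  have hs1 : s ≤ 1 := by rw [hs, div_le_one hl0]; linarith
  have hsum := sum_divisors_le hQ hC (by linarith : 1 < y) (fun m hm => hM m (by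
    have : (M : ℝ) < m := by linarith
    exact_mod_cast this.le)) hs1 n
  have hexp : Real.exp (y * Real.log Q) = Real.sqrt n := by
    rw [Real.sqrt_eq_rpow, Real.rpow_def_of_pos hn0, ← hx, hy]
    congr 1
    have : Real.log Q ≠ 0 := by linarith
    field_simp
  rw [hexp] at hsum
  refine (Dq_le_exp n hs0).trans (Real.exp_le_exp.2 ?_)
  have hsqrt1 : 1 ≤ Real.sqrt n := by
    rw [Real.one_le_sqrt]
    have := Real.log_le_sub_one_of_pos hn0
    linarith
  have hfirst : s * n ≤ 4 * C * n / Real.log x := by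
    rw [hs, div_mul_eq_mul_div, div_le_div_iff₀ hl0 (by linarith)]
    have : 0 < C * n := by positivity
    nlinarith
  have hinv := inv_one_sub_exp_le hs0 hs1
  have hinv0 : 0 ≤ (1 - Real.exp (-s))⁻¹ := inv_nonneg.2 (by
    have : Real.exp (-s) < 1 := by rw [Real.exp_lt_one_iff]; linarith
    linarith)
  have hinv' : (1 - Real.exp (-s))⁻¹ ≤ x / C := by
    refine hinv.trans ?_
    have : 2 / s = l / C := by rw [hs]; field_simp
    rw [this]
    gcongr
  have hsecond : 4 * (1 - Real.exp (-s))⁻¹ ^ 2 * ∑ m ∈ Finset.Icc 1 n,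
      ((Q ^ m - 1).divisors.card : ℝ) * Real.exp (-(s * m)) ≤ n / Real.log x := by
    exact error_term_le hC h3 hyx hlx hsqrt1 (Real.mul_self_sqrt hn0.le) (by linarith)
      (Real.log_le_self (by linarith)) h1 hinv0 hinv'
      (Finset.sum_nonneg fun _ _ => mul_nonneg (Nat.cast_nonneg _) (Real.exp_pos _).le) hsum
  calc _ ≤ 4 * C * n / Real.log x + n / Real.log x := add_le_add hfirst hsecond
    _ = _ := by ring
end

section
/- Fix a prime power q. Let A_q(n) be the number of conjugacy classes of the symmetric group on the set (F_q)^n that contain at least one invertible affine-linear transformation of (F_q)^n. There exists a constant C > 0 such that for all sufficiently large n, A_q(n) ≤ exp(C·n / log log n). -/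
/-!
The conjugacy class of a permutation `g` is determined by the numbers of fixed points of its powers
(`isConj_of_card_fixed_eq`). For an affine map `g x = A x + b` over `F` of characteristic `p`, the
fixed points of `g^k` form either the empty set or a coset of `ker (A^k - 1)`. Write `k = p^a k'` with
`p ∤ k'`. Averaging over a cycle shows that emptiness depends only on `a`, and monotonically, so it is
recorded by one integer of size `O(n)` (`exists_fixed_iff_fixExp_le`, `fixExp_le`). On the other hand
`X^k - 1 = ∏_{m ∣ k'} Φ_m^(p^a)` with coprime factors, so the dimension of `ker (A^k - 1)` is the sum
over `m ∣ k'` of `f(m, a) = dim ker Φ_m(A)^(p^a)` (`finrank_ker_pow_sub_one`).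

Let `w(m)` be the order of `q` mod `m`, the degree of every irreducible factor of `Φ_m` over `F`. The
increments of `f(m, ·)` are zero or at least `w(m)`, their total over all `(m, a)` is at most `n`, and
only `O(log n)` values of `a` matter. Rankin's trick with a parameter `t > 0` bounds the number of such
families of increments by `exp (t n + O(log n) (1 + 1/t) ∑_m e^(-t w(m)))` (`card_weightSet_le`). Since
the `m` with `w(m) = d` divide `q^d - 1`, the divisor bound `τ(N) ≤ (2/δ)^(2^(1/δ)) N^δ`, applied with
`δ` proportional to `t`, controls the sum (`sum_Mset_le`). For `t = c / log log n` with a suitable `c`,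
everything except the term `t n` contributes at most `O(n / log log n)` to the exponent.
-/

open Polynomial Filter

/-- `Aq F n` is the number of conjugacy classes of the symmetric group on `(F_q)^n`
that contain at least one invertible affine-linear transformation `x ↦ A x + b`
(with `A` an invertible linear map). -/
noncomputable def Aq (F : Type*) [Field F] [Fintype F] (n : ℕ) : ℕ :=
  Nat.card {c : ConjClasses (Equiv.Perm (Fin n → F)) //
    ∃ g : Equiv.Perm (Fin n → F), ConjClasses.mk g = c ∧
      ∃ (A : (Fin n → F) ≃ₗ[F] (Fin n → F)) (b : Fin n → F), ∀ x, g x = A x + b}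

/-! ### Cycle types and fixed points of powers -/

theorem pow_apply_eq_iff_of_mem {α : Type*} [Fintype α] [DecidableEq α] (g c : Equiv.Perm α)
    (hc : c ∈ g.cycleFactorsFinset) (x : α) (hx : x ∈ c.support) (k : ℕ) :
    (g ^ k) x = x ↔ c.support.card ∣ k := by
  have hcy := (Equiv.Perm.mem_cycleFactorsFinset_iff.mp hc).1
  have hcx : c = g.cycleOf x := Equiv.Perm.cycle_is_cycleOf hx hc
  rw [← hcy.orderOf, orderOf_dvd_iff_pow_eq_one,
    hcy.pow_eq_one_iff' (Equiv.Perm.mem_support.mp hx), hcx, Equiv.Perm.cycleOf_pow_apply_self]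

/-- The points lying on cycles of length `l ≥ 2`. -/
theorem card_minimalPeriod_eq_s2 {α : Type*} [Fintype α] [DecidableEq α] (g : Equiv.Perm α)
    (l : ℕ) (hl : 2 ≤ l) :
    (Finset.univ.filter fun x => Function.minimalPeriod g x = l).card
      = l * g.cycleType.count l := by
  classical
  have key : ∀ c ∈ g.cycleFactorsFinset, ∀ x ∈ c.support,
      Function.minimalPeriod g x = c.support.card := by
    intro c hc x hx
    apply Nat.dvd_antisymm
    · rw [← Function.isPeriodicPt_iff_minimalPeriod_dvd, Function.IsPeriodicPt,
        Function.IsFixedPt, ← Equiv.Perm.coe_pow, pow_apply_eq_iff_of_mem g c hc x hx]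
    · rw [← pow_apply_eq_iff_of_mem g c hc x hx, Equiv.Perm.coe_pow]
      exact Function.iterate_minimalPeriod
  have h : (Finset.univ.filter fun x => Function.minimalPeriod g x = l)
      = (g.cycleFactorsFinset.filter fun c => c.support.card = l).biUnion
          Equiv.Perm.support := by
    ext x
    simp only [Finset.mem_filter, Finset.mem_univ, true_and, Finset.mem_biUnion]
    constructor
    · intro hx
      have hgx : x ∈ g.support := by
        rw [Equiv.Perm.mem_support]
        intro h0
        have := Function.minimalPeriod_eq_one_iff_isFixedPt.mpr (show Function.IsFixedPt g x from h0)
        omega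
      have hc := Equiv.Perm.cycleOf_mem_cycleFactorsFinset_iff.mpr hgx
      have hxc : x ∈ (g.cycleOf x).support := by
        rw [Equiv.Perm.mem_support_cycleOf_iff]
        exact ⟨Equiv.Perm.SameCycle.refl _ _, hgx⟩
      exact ⟨_, ⟨hc, by rw [← key _ hc x hxc, hx]⟩, hxc⟩
    · rintro ⟨c, ⟨hc, hcl⟩, hx⟩
      rw [key c hc x hx, hcl]
  rw [h, Finset.card_biUnion]
  · rw [Finset.sum_congr rfl (g := fun _ => l)]
    · rw [Finset.sum_const, smul_eq_mul, mul_comm, Equiv.Perm.cycleType_def, Multiset.count_map]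
      congr 1
      simp only [Function.comp_apply, eq_comm (a := l)]
      rfl
    · intro c hc
      exact (Finset.mem_filter.mp hc).2
  · intro c hc d hd hcd
    exact Equiv.Perm.disjoint_iff_disjoint_support.mp
      (g.cycleFactorsFinset_pairwise_disjoint (Finset.mem_filter.mp hc).1
        (Finset.mem_filter.mp hd).1 hcd)

/-- The numbers of fixed points of the powers of a permutation determine its cycle type: by induction
on `l` they determine the number of points of minimal period `l`. -/
theorem isConj_of_card_fixed_eq {α : Type*} [Fintype α] [DecidableEq α] (g h : Equiv.Perm α)
    (H : ∀ k, 0 < k → (Finset.univ.filter fun x => (g ^ k) x = x).card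
      = (Finset.univ.filter fun x => (h ^ k) x = x).card) : IsConj g h := by
  classical
  have fix : ∀ (g : Equiv.Perm α) (k : ℕ), 0 < k →
      (Finset.univ.filter fun x => (g ^ k) x = x).card
        = ∑ l ∈ k.divisors, (Finset.univ.filter fun x => Function.minimalPeriod g x = l).card := by
    intro g k hk
    have hiff : ∀ x, (g ^ k) x = x ↔ Function.minimalPeriod g x ∣ k := by
      intro x
      rw [← Function.isPeriodicPt_iff_minimalPeriod_dvd, Equiv.Perm.coe_pow]
      rfl
    rw [Finset.card_eq_sum_card_fiberwise (f := fun x => Function.minimalPeriod g x)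
      (t := k.divisors)]
    · refine Finset.sum_congr rfl fun l hl => ?_
      congr 1
      ext x
      simp only [Finset.mem_filter, Finset.mem_univ, true_and, and_iff_right_iff_imp]
      rintro rfl
      exact (hiff x).mpr (Nat.dvd_of_mem_divisors hl)
    · intro x hx
      simp only [Finset.coe_filter, Finset.mem_univ, true_and, Set.mem_ofPred_eq] at hx
      simp only [Finset.mem_coe, Nat.mem_divisors]
      exact ⟨(hiff x).mp hx, hk.ne'⟩
  have hN : ∀ l, 0 < l → (Finset.univ.filter fun x => Function.minimalPeriod g x = l).card
      = (Finset.univ.filter fun x => Function.minimalPeriod h x = l).card := by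
    intro l
    induction l using Nat.strong_induction_on with
    | _ l ih =>
      intro hl
      have := H l hl
      rw [fix g l hl, fix h l hl, ← Nat.cons_self_properDivisors hl.ne', Finset.sum_cons,
        Finset.sum_cons, Finset.sum_congr rfl (fun d hd => ih d
          (Nat.mem_properDivisors.mp hd).2 (Nat.pos_of_mem_properDivisors hd))] at this
      omega
  rw [Equiv.Perm.isConj_iff_cycleType_eq]
  ext l
  rcases lt_or_ge l 2 with hl | hl
  · rw [Multiset.count_eq_zero_of_notMem, Multiset.count_eq_zero_of_notMem] <;>
      exact fun h' => by have := Equiv.Perm.two_le_of_mem_cycleType h'; omega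
  · have := hN l (by omega)
    rw [card_minimalPeriod_eq_s2 g l hl, card_minimalPeriod_eq_s2 h l hl] at this
    exact Nat.eq_of_mul_eq_mul_left (by omega) this

/-! ### Kernels of cyclotomic polynomials in an endomorphism -/

/-- `fdim A p m a` is `dim ker Φ_m(A)^(p^a)`. -/
noncomputable def fdim {F V : Type*} [Field F] [AddCommGroup V] [Module F V]
    (A : Module.End F V) (p m a : ℕ) : ℕ :=
  Module.finrank F (LinearMap.ker (aeval A (cyclotomic m F ^ p ^ a)))

theorem finrank_ker_aeval_mul {F V : Type*} [Field F] [AddCommGroup V] [Module F V]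
    [FiniteDimensional F V] (A : Module.End F V) (P Q : F[X]) (h : IsCoprime P Q) :
    Module.finrank F (LinearMap.ker (aeval A (P * Q)))
      = Module.finrank F (LinearMap.ker (aeval A P))
        + Module.finrank F (LinearMap.ker (aeval A Q)) := by
  rw [← sup_ker_aeval_eq_ker_aeval_mul_of_coprime A h,
    ← Submodule.finrank_sup_add_finrank_inf_eq,
    (disjoint_iff.mp (disjoint_ker_aeval_of_isCoprime A h)), finrank_bot, add_zero]

theorem finrank_ker_aeval_prod {F V ι : Type*} [Field F] [AddCommGroup V] [Module F V]
    [FiniteDimensional F V] (A : Module.End F V) (s : Finset ι) (P : ι → F[X])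
    (h : (s : Set ι).Pairwise fun i j => IsCoprime (P i) (P j)) :
    Module.finrank F (LinearMap.ker (aeval A (∏ i ∈ s, P i)))
      = ∑ i ∈ s, Module.finrank F (LinearMap.ker (aeval A (P i))) := by
  classical
  induction s using Finset.induction_on with
  | empty =>
    have : LinearMap.ker (1 : Module.End F V) = ⊥ := LinearMap.ker_id
    rw [Finset.prod_empty, map_one, this, finrank_bot, Finset.sum_empty]
  | insert i s hi ih =>
    rw [Finset.prod_insert hi, Finset.sum_insert hi, finrank_ker_aeval_mul, ih]
    · exact h.mono (by simp)
    · refine IsCoprime.prod_right fun j hj => h (by simp) (by simp [hj]) ?_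
      rintro rfl
      exact hi hj

/-- Both factors divide the separable polynomial `X^(m m') - 1`. -/
theorem isCoprime_cyclotomic {F : Type*} [Field F] (p : ℕ) [CharP F p] [Fact p.Prime]
    {m m' : ℕ} (hm : ¬ p ∣ m) (hm' : ¬ p ∣ m') (hne : m ≠ m') :
    IsCoprime (cyclotomic m F) (cyclotomic m' F) := by
  have hp : p.Prime := Fact.out
  have hm0 : m ≠ 0 := by rintro rfl; simp at hm
  have hm0' : m' ≠ 0 := by rintro rfl; simp at hm'
  have hN : ¬ p ∣ m * m' := fun h => (hp.dvd_mul.mp h).elim hm hm'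
  have hs : (X ^ (m * m') - 1 : F[X]).Separable := by
    rw [X_pow_sub_one_separable_iff]
    exact fun h => hN ((CharP.cast_eq_zero_iff F p _).mp h)
  refine Separable.isCoprime (hs.of_dvd ?_)
  rw [← prod_cyclotomic_eq_X_pow_sub_one (Nat.pos_of_ne_zero (mul_ne_zero hm0 hm0')),
    ← Finset.prod_pair hne (f := fun i => cyclotomic i F)]
  apply Finset.prod_dvd_prod_of_subset
  intro i hi
  simp only [Finset.mem_insert, Finset.mem_singleton] at hi
  rw [Nat.mem_divisors]
  rcases hi with rfl | rfl
  · exact ⟨dvd_mul_right _ _, mul_ne_zero hm0 hm0'⟩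
  · exact ⟨dvd_mul_left _ _, mul_ne_zero hm0 hm0'⟩

/-- In characteristic `p`, `X^(p^a k) - 1 = (X^k - 1)^(p^a) = ∏_{m ∣ k} Φ_m^(p^a)`, and the factors are
pairwise coprime. -/
theorem finrank_ker_pow_sub_one {F V : Type*} [Field F] [AddCommGroup V] [Module F V]
    [FiniteDimensional F V] (A : Module.End F V) (p : ℕ) [CharP F p] [Fact p.Prime]
    (a k : ℕ) (hk : ¬ p ∣ k) :
    Module.finrank F (LinearMap.ker (A ^ (p ^ a * k) - 1))
      = ∑ m ∈ k.divisors, fdim A p m a := by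
  have hk0 : k ≠ 0 := by rintro rfl; simp at hk
  have h1 : (X ^ (p ^ a * k) - 1 : F[X]) = ∏ m ∈ k.divisors, cyclotomic m F ^ p ^ a := by
    rw [Finset.prod_pow, prod_cyclotomic_eq_X_pow_sub_one (Nat.pos_of_ne_zero hk0),
      sub_pow_char_pow, one_pow, mul_comm, pow_mul]
  have h2 : A ^ (p ^ a * k) - 1 = aeval A (X ^ (p ^ a * k) - 1 : F[X]) := by simp
  rw [h2, h1, finrank_ker_aeval_prod]
  · rfl
  · intro i hi j hj hij
    have hi' := Nat.dvd_of_mem_divisors (Finset.mem_coe.mp hi)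
    have hj' := Nat.dvd_of_mem_divisors (Finset.mem_coe.mp hj)
    exact (isCoprime_cyclotomic p (fun h => hk (h.trans hi')) (fun h => hk (h.trans hj'))
      hij).pow

/-- The minimal polynomial of `A` on `U` is a nonunit dividing a power of `Φ_m`, hence has an
irreducible factor of `Φ_m`, and these have degree the order of `q` mod `m`. -/
theorem orderOf_le_finrank_of_invariant {F V : Type*} [Field F] [Fintype F] [AddCommGroup V]
    [Module F V] [FiniteDimensional F V] (A : Module.End F V) (p : ℕ) [CharP F p] [Fact p.Prime]
    {m : ℕ} (hm : ¬ p ∣ m) (j : ℕ) (U : Submodule F V) (hU : U ≠ ⊥)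
    (hinv : ∀ x ∈ U, A x ∈ U) (hker : U ≤ LinearMap.ker (aeval A (cyclotomic m F ^ j))) :
    orderOf (Fintype.card F : ZMod m) ≤ Module.finrank F U := by
  have hp : p.Prime := Fact.out
  obtain ⟨f, -, hf⟩ := FiniteField.card F p
  set B : Module.End F U := A.restrict hinv with hB
  have hBpow : ∀ (P : F[X]) (u : U), ((aeval B P u : U) : V) = aeval A P (u : V) := by
    intro P u
    induction P using Polynomial.induction_on' with
    | add P Q hP hQ => simp [hP, hQ]
    | monomial n c =>
      simp only [aeval_monomial]
      have : ((B ^ n) u : V) = (A ^ n) u := by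
        rw [hB, Module.End.pow_restrict]; rfl
      simp [this, Module.algebraMap_end_apply]
  have hz : aeval B (cyclotomic m F ^ j) = 0 := by
    ext u
    rw [hBpow]
    simpa using hker u.2
  have hnt : Nontrivial U := Submodule.nontrivial_iff_ne_bot.mpr hU
  have hdvd : minpoly F B ∣ cyclotomic m F ^ j := minpoly.dvd F B hz
  have hnu : ¬ IsUnit (minpoly F B) := minpoly.not_isUnit F B
  have hn0 : minpoly F B ≠ 0 := minpoly.ne_zero (Algebra.IsIntegral.isIntegral B)
  obtain ⟨φ, hφ, hφd⟩ := WfDvdMonoid.exists_irreducible_factor hnu hn0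
  have hφc : φ ∣ cyclotomic m F := hφ.prime.dvd_of_dvd_pow (hφd.trans hdvd)
  have hcop : p.Coprime m := (Nat.Prime.coprime_iff_not_dvd hp).mpr hm
  have hdeg := natDegree_of_dvd_cyclotomic_of_irreducible hf hcop hφc hφ
  have : orderOf (Fintype.card F : ZMod m) = φ.natDegree := by
    rw [hdeg, ← orderOf_units, ZMod.coe_unitOfCoprime, hf]
  rw [this]
  calc φ.natDegree ≤ (minpoly F B).natDegree := natDegree_le_of_dvd hφd hn0
    _ ≤ B.charpoly.natDegree := natDegree_le_of_dvd (LinearMap.minpoly_dvd_charpoly B)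
        (LinearMap.charpoly_monic B).ne_zero
    _ = _ := LinearMap.charpoly_natDegree B

theorem aeval_apply_comm {F V : Type*} [Field F] [AddCommGroup V] [Module F V]
    (A : Module.End F V) (P : F[X]) (x : V) : aeval A P (A x) = A (aeval A P x) := by
  have h : aeval A (P * X) = aeval A (X * P) := by rw [mul_comm]
  simpa using congrArg (fun f : Module.End F V => f x) h

theorem aeval_ker_mono {F V : Type*} [Field F] [AddCommGroup V] [Module F V]
    (A : Module.End F V) (P : F[X]) {i j : ℕ} (hij : i ≤ j) :
    LinearMap.ker (aeval A (P ^ i)) ≤ LinearMap.ker (aeval A (P ^ j)) := by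
  intro x hx
  obtain ⟨d, rfl⟩ := Nat.exists_eq_add_of_le hij
  rw [LinearMap.mem_ker] at hx ⊢
  rw [add_comm, pow_add, map_mul, Module.End.mul_apply, hx, map_zero]

theorem fdim_mono {F V : Type*} [Field F] [AddCommGroup V] [Module F V] [FiniteDimensional F V]
    (A : Module.End F V) (p : ℕ) (hp : 0 < p) (m : ℕ) : Monotone (fdim A p m) := by
  intro a b hab
  exact Submodule.finrank_mono (aeval_ker_mono A _ (Nat.pow_le_pow_right hp hab))

theorem fdim_eq_zero_or_le {F V : Type*} [Field F] [Fintype F] [AddCommGroup V]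
    [Module F V] [FiniteDimensional F V] (A : Module.End F V) (p : ℕ) [CharP F p] [Fact p.Prime]
    {m : ℕ} (hm : ¬ p ∣ m) :
    fdim A p m 0 = 0 ∨ orderOf (Fintype.card F : ZMod m) ≤ fdim A p m 0 := by
  rw [or_iff_not_imp_left]
  intro h
  refine orderOf_le_finrank_of_invariant A p hm (p ^ 0) _ ?_ ?_ le_rfl
  · intro h0
    exact h (by rw [fdim, h0, finrank_bot])
  · intro x hx
    rw [LinearMap.mem_ker] at hx ⊢
    rw [aeval_apply_comm, hx, map_zero]

/-- The difference is the dimension of the image of `ker Φ_m(A)^(p^(a+1))` under `Φ_m(A)^(p^a)`,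
an invariant subspace killed by a power of `Φ_m(A)`. -/
theorem fdim_step {F V : Type*} [Field F] [Fintype F] [AddCommGroup V]
    [Module F V] [FiniteDimensional F V] (A : Module.End F V) (p : ℕ) [CharP F p] [Fact p.Prime]
    {m : ℕ} (hm : ¬ p ∣ m) (a : ℕ) :
    fdim A p m (a + 1) - fdim A p m a = 0 ∨
      orderOf (Fintype.card F : ZMod m) ≤ fdim A p m (a + 1) - fdim A p m a := by
  have hp : p.Prime := Fact.out
  set W := LinearMap.ker (aeval A (cyclotomic m F ^ p ^ (a + 1))) with hW
  set f := aeval A (cyclotomic m F ^ p ^ a) with hf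
  have hle : LinearMap.ker f ≤ W := aeval_ker_mono A _ (Nat.pow_le_pow_right hp.pos (by omega))
  have hdim : Module.finrank F (W.map f) = fdim A p m (a + 1) - fdim A p m a := by
    have h1 := LinearMap.finrank_range_add_finrank_ker (f.domRestrict W)
    rw [LinearMap.range_domRestrict, LinearMap.ker_domRestrict] at h1
    have h2 := (Submodule.comapSubtypeEquivOfLe hle).finrank_eq
    have h3 : Module.finrank F W = fdim A p m (a + 1) := rfl
    have h4 : Module.finrank F (LinearMap.ker f) = fdim A p m a := rfl
    omega
  rw [← hdim, or_iff_not_imp_left]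
  intro h
  refine orderOf_le_finrank_of_invariant A p hm (p ^ (a + 1)) _ ?_ ?_ ?_
  · intro h0
    exact h (by rw [h0, finrank_bot])
  · rintro _ ⟨x, hx, rfl⟩
    refine ⟨A x, ?_, aeval_apply_comm _ _ _⟩
    have hx' : aeval A (cyclotomic m F ^ p ^ (a + 1)) x = 0 := hx
    show aeval A (cyclotomic m F ^ p ^ (a + 1)) (A x) = 0
    rw [aeval_apply_comm, hx', map_zero]
  · rintro _ ⟨x, hx, rfl⟩
    have hx' : aeval A (cyclotomic m F ^ p ^ (a + 1)) x = 0 := hx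
    show aeval A (cyclotomic m F ^ p ^ (a + 1)) (aeval A (cyclotomic m F ^ p ^ a) x) = 0
    rw [← Module.End.mul_apply, ← map_mul, mul_comm, map_mul, Module.End.mul_apply, hx', map_zero]

theorem fdim_stable {F V : Type*} [Field F] [AddCommGroup V]
    [Module F V] [FiniteDimensional F V] (A : Module.End F V) (p : ℕ) (hp : 0 < p) (m a : ℕ)
    (ha : Module.finrank F V ≤ p ^ a) :
    fdim A p m (a + 1) = fdim A p m a := by
  unfold fdim
  have h1 := Module.End.ker_pow_eq_ker_pow_finrank_of_le (f := aeval A (cyclotomic m F)) ha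
  have h2 := Module.End.ker_pow_eq_ker_pow_finrank_of_le (f := aeval A (cyclotomic m F))
    (ha.trans (Nat.pow_le_pow_right hp (Nat.le_succ a)))
  rw [map_pow, map_pow, h1, h2]

/-! ### Increments of the kernel dimensions -/

/-- The increments `fdim A p m a - fdim A p m (a - 1)`, starting with `fdim A p m 0` at `a = 0`. -/
noncomputable def gdim {F V : Type*} [Field F] [AddCommGroup V] [Module F V]
    (A : Module.End F V) (p m a : ℕ) : ℕ :=
  fdim A p m a - if a = 0 then 0 else fdim A p m (a - 1)

theorem sum_gdim {F V : Type*} [Field F] [AddCommGroup V] [Module F V] [FiniteDimensional F V]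
    (A : Module.End F V) (p : ℕ) (hp : 0 < p) (m a : ℕ) :
    ∑ b ∈ Finset.range (a + 1), gdim A p m b = fdim A p m a := by
  induction a with
  | zero => simp [gdim]
  | succ a ih =>
    rw [Finset.sum_range_succ, ih]
    have := fdim_mono A p hp m (Nat.le_succ a)
    simp only [gdim, Nat.succ_ne_zero, if_false, Nat.add_sub_cancel, Nat.succ_eq_add_one] at this ⊢
    omega

theorem gdim_eq_zero_or_le {F V : Type*} [Field F] [Fintype F] [AddCommGroup V]
    [Module F V] [FiniteDimensional F V] (A : Module.End F V) (p : ℕ) [CharP F p] [Fact p.Prime]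
    {m : ℕ} (hm : ¬ p ∣ m) (a : ℕ) :
    gdim A p m a = 0 ∨ orderOf (Fintype.card F : ZMod m) ≤ gdim A p m a := by
  rcases a with _ | a
  · simpa [gdim] using fdim_eq_zero_or_le A p hm
  · simpa [gdim] using fdim_step A p hm a

/-- The `m` prime to `p` for which `q` has order at most `n` mod `m`. The bound `m ≤ q^n` follows from
the order condition and only serves to make the set a `Finset`. -/
noncomputable def Mset (p q n : ℕ) : Finset ℕ :=
  (Finset.range (q ^ n + 1)).filter fun m => ¬ p ∣ m ∧ orderOf (q : ZMod m) ≤ n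

/-- The pairs `(m, a)` at which `gdim` can be nonzero in dimension `n`; the kernels of `Φ_m(A)^(p^a)` are
stationary once `p^a ≥ n`. -/
noncomputable def Iset (p q n : ℕ) : Finset (ℕ × ℕ) :=
  Mset p q n ×ˢ Finset.range (Nat.log 2 n + 2)

theorem dvd_pow_orderOf_sub_one {F : Type*} [Field F] [Fintype F] (p : ℕ) [CharP F p]
    [Fact p.Prime] {m : ℕ} (hm : ¬ p ∣ m) :
    0 < orderOf (Fintype.card F : ZMod m) ∧
      m ∣ Fintype.card F ^ orderOf (Fintype.card F : ZMod m) - 1 := by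
  have hp : p.Prime := Fact.out
  obtain ⟨f, -, hf⟩ := FiniteField.card F p
  have hcop : p.Coprime m := (Nat.Prime.coprime_iff_not_dvd hp).mpr hm
  have hm0 : m ≠ 0 := by rintro rfl; simp at hm
  have : NeZero m := ⟨hm0⟩
  constructor
  · have h1 := orderOf_pos (ZMod.unitOfCoprime (p ^ (f : ℕ)) (hcop.pow_left f))
    rw [← orderOf_units, ZMod.coe_unitOfCoprime, ← hf] at h1
    exact h1
  · have h1 := pow_orderOf_eq_one (Fintype.card F : ZMod m)
    have h2 : 1 ≤ Fintype.card F ^ orderOf (Fintype.card F : ZMod m) :=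
      Nat.one_le_pow _ _ Fintype.card_pos
    rw [← ZMod.natCast_eq_zero_iff, Nat.cast_sub h2]
    push_cast
    rw [h1, sub_self]

theorem gdim_eq_zero {F V : Type*} [Field F] [Fintype F] [AddCommGroup V]
    [Module F V] [FiniteDimensional F V] (A : Module.End F V) (p : ℕ) [CharP F p] [Fact p.Prime]
    {m : ℕ} (hm : ¬ p ∣ m) (a : ℕ)
    (h : (m, a) ∉ Iset p (Fintype.card F) (Module.finrank F V)) : gdim A p m a = 0 := by
  have hp : p.Prime := Fact.out
  set n := Module.finrank F V with hn
  by_contra hne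
  have hle := (gdim_eq_zero_or_le A p hm a).resolve_left hne
  have hgn : gdim A p m a ≤ n := (Nat.sub_le _ _).trans (Submodule.finrank_le _)
  apply h
  obtain ⟨h1, h2⟩ := dvd_pow_orderOf_sub_one (F := F) p hm
  have hq : 1 < Fintype.card F := Fintype.one_lt_card
  have hle' := hle.trans hgn
  rw [Iset, Mset, Finset.mem_product, Finset.mem_filter, Finset.mem_range, Finset.mem_range]
  refine ⟨⟨?_, hm, hle'⟩, ?_⟩
  · have h3 : Fintype.card F ^ orderOf (Fintype.card F : ZMod m) ≤ Fintype.card F ^ n :=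
      Nat.pow_le_pow_right hq.le hle'
    have h4 : 1 < Fintype.card F ^ orderOf (Fintype.card F : ZMod m) :=
      Nat.one_lt_pow h1.ne' hq
    have h5 := Nat.le_of_dvd (by omega) h2
    show m < _
    omega
  · by_contra hlt
    obtain ⟨b, rfl⟩ : ∃ b, a = b + 1 := ⟨a - 1, by simp only [not_lt] at hlt; omega⟩
    apply hne
    have hb : n ≤ p ^ b := calc
      n ≤ 2 ^ (Nat.log 2 n + 1) := (Nat.lt_pow_succ_log_self (by norm_num) n).le
      _ ≤ 2 ^ b := Nat.pow_le_pow_right (by norm_num) (by simp only [not_lt] at hlt; omega)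
      _ ≤ p ^ b := Nat.pow_le_pow_left hp.two_le b
    simp [gdim, fdim_stable A p hp.pos m b hb]

/-- With `N` the product of all `m` in `Mset p q n` and `b = log₂ n + 1`, the sum is at most
`dim ker (A^(p^b N) - 1)`. -/
theorem sum_gdim_le {F V : Type*} [Field F] [Fintype F] [AddCommGroup V]
    [Module F V] [FiniteDimensional F V] (A : Module.End F V) (p : ℕ) [CharP F p] [Fact p.Prime]
    (n : ℕ) :
    ∑ i ∈ Iset p (Fintype.card F) n, gdim A p i.1 i.2 ≤ Module.finrank F V := by
  have hp : p.Prime := Fact.out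
  set M := Mset p (Fintype.card F) n with hM
  have hMp : ∀ m ∈ M, ¬ p ∣ m := fun m hm => (Finset.mem_filter.mp hm).2.1
  have hk : ¬ p ∣ ∏ m ∈ M, m := by
    rw [hp.prime.dvd_finsetProd_iff]
    rintro ⟨m, hm, h⟩
    exact hMp m hm h
  have hk0 : ∏ m ∈ M, m ≠ 0 := by intro h; rw [h] at hk; simp at hk
  rw [Iset, Finset.sum_product]
  calc ∑ m ∈ M, ∑ a ∈ Finset.range (Nat.log 2 n + 2), gdim A p m a
      = ∑ m ∈ M, fdim A p m (Nat.log 2 n + 1) :=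
        Finset.sum_congr rfl fun m _ => sum_gdim A p hp.pos m _
    _ ≤ ∑ m ∈ (∏ m ∈ M, m).divisors, fdim A p m (Nat.log 2 n + 1) := by
        apply Finset.sum_le_sum_of_subset
        intro m hm
        exact Nat.mem_divisors.mpr ⟨Finset.dvd_prod_of_mem _ hm, hk0⟩
    _ = _ := (finrank_ker_pow_sub_one A p (Nat.log 2 n + 1) _ hk).symm
    _ ≤ _ := Submodule.finrank_le _

theorem fdim_eq_of_gdim_eq {F V : Type*} [Field F] [Fintype F] [AddCommGroup V]
    [Module F V] [FiniteDimensional F V] (A A' : Module.End F V) (p : ℕ) [CharP F p]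
    [Fact p.Prime]
    (h : ∀ i ∈ Iset p (Fintype.card F) (Module.finrank F V), gdim A p i.1 i.2 = gdim A' p i.1 i.2)
    {m : ℕ} (hm : ¬ p ∣ m) (a : ℕ) : fdim A p m a = fdim A' p m a := by
  have hp : p.Prime := Fact.out
  rw [← sum_gdim A p hp.pos m a, ← sum_gdim A' p hp.pos m a]
  refine Finset.sum_congr rfl fun b _ => ?_
  by_cases hI : (m, b) ∈ Iset p (Fintype.card F) (Module.finrank F V)
  · exact h (m, b) hI
  · rw [gdim_eq_zero A p hm b hI, gdim_eq_zero A' p hm b hI]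

/-! ### Counting weighted functions -/

theorem one_div_one_sub_exp_le (t : ℝ) (ht : 0 < t) :
    1 / (1 - Real.exp (-t)) ≤ 1 + 1 / t := by
  have h1 : Real.exp (-t) * (1 + t) ≤ 1 := by
    have : 1 + t ≤ Real.exp t := by linarith [Real.add_one_le_exp t]
    calc Real.exp (-t) * (1 + t) ≤ Real.exp (-t) * Real.exp t := by gcongr
      _ = 1 := by rw [← Real.exp_add]; simp
  have h2 : Real.exp (-t) < 1 := by rw [Real.exp_lt_one_iff]; linarith
  rw [show 1 + 1 / t = (1 + t) / t by field_simp; ring, div_le_div_iff₀ (by linarith) ht]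
  nlinarith

/-- The functions `g : ι → ℕ` with total at most `n` whose nonzero values satisfy `w i ≤ g i`. -/
def weightSet {ι : Type*} [Fintype ι] [DecidableEq ι] (w : ι → ℕ) (n : ℕ) : Finset (ι → ℕ) :=
  (Fintype.piFinset fun i => (Finset.range (n + 1)).filter fun v => v = 0 ∨ w i ≤ v).filter
    fun g => ∑ i, g i ≤ n

/-- Rankin's trick: `1 ≤ e^(t n) ∏ e^(-t g i)` on `weightSet w n`, and the sum of the right-hand side
over all `g` factors as a product of geometric series. -/
theorem card_weightSet_le {ι : Type*} [Fintype ι] [DecidableEq ι] (w : ι → ℕ) (n : ℕ)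
    (t : ℝ) (ht : 0 < t) :
    ((weightSet w n).card : ℝ)
      ≤ Real.exp (t * n + ∑ i, (1 + 1 / t) * Real.exp (-t * w i)) := by
  set x := Real.exp (-t) with hx
  have hx0 : 0 < x := Real.exp_pos _
  have hx1 : x < 1 := by rw [hx, Real.exp_lt_one_iff]; linarith
  have hxinv : 1 / (1 - x) ≤ 1 + 1 / t := one_div_one_sub_exp_le t ht
  have hpow : ∀ v : ℕ, x ^ v = Real.exp (-t * v) := by
    intro v; rw [hx, ← Real.exp_nat_mul]; congr 1; ring
  set R : ι → Finset ℕ := fun i => (Finset.range (n + 1)).filter fun v => v = 0 ∨ w i ≤ v with hR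
  have hfac : ∀ i, ∑ v ∈ R i, x ^ v ≤ Real.exp ((1 + 1 / t) * Real.exp (-t * w i)) := by
    intro i
    have hsub : R i ⊆ {0} ∪ Finset.Ico (w i) (n + 1) := by
      intro v hv
      simp only [hR, Finset.mem_filter, Finset.mem_range] at hv
      simp only [Finset.mem_union, Finset.mem_singleton, Finset.mem_Ico]
      tauto
    calc ∑ v ∈ R i, x ^ v ≤ ∑ v ∈ {0} ∪ Finset.Ico (w i) (n + 1), x ^ v :=
          Finset.sum_le_sum_of_subset_of_nonneg hsub fun _ _ _ => by positivity
      _ ≤ ∑ v ∈ {0}, x ^ v + ∑ v ∈ Finset.Ico (w i) (n + 1), x ^ v := by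
          rw [← Finset.sum_union_inter]
          have : 0 ≤ ∑ v ∈ {0} ∩ Finset.Ico (w i) (n + 1), x ^ v :=
            Finset.sum_nonneg fun _ _ => by positivity
          linarith
      _ ≤ 1 + x ^ w i / (1 - x) := by
          gcongr
          · simp
          · exact geom_sum_Ico_le_of_lt_one hx0.le hx1
      _ ≤ 1 + (1 + 1 / t) * Real.exp (-t * w i) := by
          rw [div_eq_mul_one_div, hpow, mul_comm]
          gcongr
      _ ≤ _ := by linarith [Real.add_one_le_exp ((1 + 1 / t) * Real.exp (-t * w i))]
  calc ((weightSet w n).card : ℝ) = ∑ g ∈ weightSet w n, (1 : ℝ) := by simp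
    _ ≤ ∑ g ∈ weightSet w n, Real.exp (t * n) * ∏ i, x ^ g i := by
        refine Finset.sum_le_sum fun g hg => ?_
        have hg' : ∑ i, g i ≤ n := (Finset.mem_filter.mp hg).2
        rw [Finset.prod_pow_eq_pow_sum, hpow, ← Real.exp_add]
        apply Real.one_le_exp
        have : ((∑ i, g i : ℕ) : ℝ) ≤ n := by exact_mod_cast hg'
        nlinarith
    _ ≤ ∑ g ∈ Fintype.piFinset R, Real.exp (t * n) * ∏ i, x ^ g i :=
        Finset.sum_le_sum_of_subset_of_nonneg (Finset.filter_subset _ _)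
          fun _ _ _ => by positivity
    _ = Real.exp (t * n) * ∏ i, ∑ v ∈ R i, x ^ v := by
        rw [← Finset.mul_sum, Finset.prod_univ_sum]
    _ ≤ Real.exp (t * n) * ∏ i, Real.exp ((1 + 1 / t) * Real.exp (-t * w i)) := by
        gcongr with i
        exact hfac i
    _ = _ := by rw [Real.exp_add, Real.exp_sum]

/-! ### Fixed points of powers of affine maps -/

theorem affine_pow_sub {F V : Type*} [Field F] [AddCommGroup V] [Module F V]
    (g : Equiv.Perm V) (A : Module.End F V) (b : V) (h : ∀ x, g x = A x + b) (k : ℕ) (x y : V) :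
    (g ^ k) x - (g ^ k) y = (A ^ k) (x - y) := by
  induction k with
  | zero => simp
  | succ k ih =>
    rw [pow_succ', pow_succ', Equiv.Perm.mul_apply, Equiv.Perm.mul_apply, h, h,
      Module.End.mul_apply, ← ih, map_sub]
    abel

theorem affine_pow_eq {F V : Type*} [Field F] [AddCommGroup V] [Module F V]
    (g : Equiv.Perm V) (A : Module.End F V) (b : V) (h : ∀ x, g x = A x + b) (k : ℕ) (x : V) :
    (g ^ k) x = (A ^ k) x + (g ^ k) 0 := by
  have := affine_pow_sub g A b h k x 0
  rw [sub_zero] at this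
  rw [← this]; abel

theorem card_fixed_affine {F V : Type*} [Field F] [Fintype F] [AddCommGroup V] [Module F V]
    [Fintype V] [DecidableEq V]
    (g : Equiv.Perm V) (A : Module.End F V) (b : V) (h : ∀ x, g x = A x + b) (k : ℕ)
    (hfix : ∃ x, (g ^ k) x = x) :
    (Finset.univ.filter fun x => (g ^ k) x = x).card
      = Fintype.card F ^ Module.finrank F (LinearMap.ker (A ^ k - 1)) := by
  classical
  obtain ⟨x₀, hx₀⟩ := hfix
  rw [← Module.card_eq_pow_finrank (K := F) (V := LinearMap.ker (A ^ k - 1)),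
    ← Fintype.card_subtype]
  refine Fintype.card_congr ⟨fun x => ⟨x.1 - x₀, ?_⟩, fun y => ⟨y.1 + x₀, ?_⟩, ?_, ?_⟩
  · rw [LinearMap.mem_ker, LinearMap.sub_apply, ← affine_pow_sub g A b h, x.2, hx₀]
    simp
  · have h1 := affine_pow_sub g A b h k (y.1 + x₀) x₀
    have h2 : (A ^ k) y.1 - y.1 = 0 := y.2
    rw [hx₀, add_sub_cancel_right, sub_eq_zero.mp h2, sub_eq_iff_eq_add] at h1
    exact h1
  · intro x; simp
  · intro y; simp

/-- If `g^k x = x` with `k` invertible in `F`, the barycentre of `x, g x, …, g^(k-1) x` is fixed by `g`. -/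
theorem exists_fixed_of_mul {F V : Type*} [Field F] [AddCommGroup V] [Module F V]
    (p : ℕ) [CharP F p]
    (g : Equiv.Perm V) (A : Module.End F V) (b : V) (h : ∀ x, g x = A x + b) (k : ℕ)
    (hk : ¬ p ∣ k) (hfix : ∃ x, (g ^ k) x = x) : ∃ x, g x = x := by
  obtain ⟨x, hx⟩ := hfix
  have hk0 : (k : F) ≠ 0 := fun h0 => hk ((CharP.cast_eq_zero_iff F p k).mp h0)
  refine ⟨(k : F)⁻¹ • ∑ i ∈ Finset.range k, (g ^ i) x, ?_⟩
  have hb : b = (k : F)⁻¹ • ∑ i ∈ Finset.range k, b := by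
    rw [Finset.sum_const, Finset.card_range, ← Nat.cast_smul_eq_nsmul F, smul_smul,
      inv_mul_cancel₀ hk0, one_smul]
  rw [h]
  rw [map_smul]
  conv_lhs => rw [hb]
  rw [← smul_add, map_sum, ← Finset.sum_add_distrib]
  congr 1
  have h1 : ∀ i ∈ Finset.range k, A ((g ^ i) x) + b = (g ^ (i + 1)) x := by
    intro i _
    rw [pow_succ', Equiv.Perm.mul_apply, h]
  rw [Finset.sum_congr rfl h1]
  have h2 := Finset.sum_range_succ (fun i => (g ^ i) x) k
  rw [Finset.sum_range_succ'] at h2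
  simp only [hx, pow_zero, Equiv.Perm.one_apply, add_left_inj] at h2
  exact h2

/-- The least `a` such that `g^(p^a)` has a fixed point. -/
noncomputable def fixExp {V : Type*} (p : ℕ) (g : Equiv.Perm V) : ℕ :=
  sInf {a | ∃ x, (g ^ p ^ a) x = x}

theorem exists_fixed_iff {F V : Type*} [Field F] [AddCommGroup V] [Module F V]
    (p : ℕ) [CharP F p]
    (g : Equiv.Perm V) (A : Module.End F V) (b : V) (h : ∀ x, g x = A x + b) (a k : ℕ)
    (hk : ¬ p ∣ k) : (∃ x, (g ^ (p ^ a * k)) x = x) ↔ ∃ x, (g ^ p ^ a) x = x := by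
  constructor
  · intro hx
    rw [pow_mul] at hx
    exact exists_fixed_of_mul p (g ^ p ^ a) (A ^ p ^ a) _ (affine_pow_eq g A b h (p ^ a)) k hk hx
  · rintro ⟨x, hx⟩
    refine ⟨x, ?_⟩
    rw [pow_mul, Equiv.Perm.coe_pow]
    exact Function.iterate_fixed hx k

/-- Take `p^a` to be the `p`-part of the length of the cycle through `0`. -/
theorem exists_fixed_prime_pow {F V : Type*} [Field F] [AddCommGroup V] [Module F V]
    [Fintype V] (p : ℕ) [CharP F p] [Fact p.Prime]
    (g : Equiv.Perm V) (A : Module.End F V) (b : V) (h : ∀ x, g x = A x + b) :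
    ∃ a, p ^ a ≤ Fintype.card V ∧ ∃ x, (g ^ p ^ a) x = x := by
  have hp : p.Prime := Fact.out
  set l := Function.minimalPeriod g 0 with hl
  have hlpos : 0 < l := by
    apply Function.minimalPeriod_pos_of_mem_periodicPts
    exact Function.mem_periodicPts.mpr ⟨orderOf g, orderOf_pos g, by
      rw [Function.IsPeriodicPt, Function.IsFixedPt, ← Equiv.Perm.coe_pow, pow_orderOf_eq_one]
      rfl⟩
  have hlcard : l ≤ Fintype.card V := Function.minimalPeriod_le_card
  obtain ⟨a, k, hk, hlk⟩ := Nat.exists_eq_pow_mul_and_not_dvd hlpos.ne' p hp.ne_one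
  refine ⟨a, ?_, ?_⟩
  · exact (Nat.le_of_dvd hlpos (hlk ▸ dvd_mul_right _ _)).trans hlcard
  · rw [← exists_fixed_iff p g A b h a k hk, ← hlk]
    exact ⟨0, by rw [Equiv.Perm.coe_pow]; exact Function.iterate_minimalPeriod⟩

theorem exists_fixed_iff_fixExp_le {F V : Type*} [Field F] [AddCommGroup V] [Module F V]
    [Fintype V] (p : ℕ) [CharP F p] [Fact p.Prime]
    (g : Equiv.Perm V) (A : Module.End F V) (b : V) (h : ∀ x, g x = A x + b) (a : ℕ) :
    (∃ x, (g ^ p ^ a) x = x) ↔ fixExp p g ≤ a := by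
  obtain ⟨a', -, ha'⟩ := exists_fixed_prime_pow p g A b h
  constructor
  · exact fun hx => Nat.sInf_le hx
  · intro hle
    obtain ⟨x, hx⟩ : ∃ x, (g ^ p ^ fixExp p g) x = x :=
      Nat.sInf_mem (s := {a | ∃ x, (g ^ p ^ a) x = x}) ⟨a', ha'⟩
    refine ⟨x, ?_⟩
    obtain ⟨d, rfl⟩ := Nat.exists_eq_add_of_le hle
    rw [pow_add, pow_mul, Equiv.Perm.coe_pow]
    exact Function.iterate_fixed hx _

theorem fixExp_le {F V : Type*} [Field F] [Fintype F] [AddCommGroup V] [Module F V]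
    [Fintype V] (p : ℕ) [CharP F p] [Fact p.Prime]
    (g : Equiv.Perm V) (A : Module.End F V) (b : V) (h : ∀ x, g x = A x + b) :
    fixExp p g ≤ Fintype.card F * Module.finrank F V := by
  have hp : p.Prime := Fact.out
  obtain ⟨a, ha, hx⟩ := exists_fixed_prime_pow p g A b h
  refine ((exists_fixed_iff_fixExp_le p g A b h a).mp hx).trans ?_
  rw [Module.card_eq_pow_finrank (K := F)] at ha
  refine (Nat.pow_le_pow_iff_right (a := 2) (by norm_num)).mp ?_
  calc 2 ^ a ≤ p ^ a := Nat.pow_le_pow_left hp.two_le a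
    _ ≤ _ := ha
    _ ≤ (2 ^ Fintype.card F) ^ Module.finrank F V :=
      Nat.pow_le_pow_left Nat.lt_two_pow_self.le _
    _ = _ := by rw [pow_mul]

/-- The least `a` such that `g^(p^a)` has a fixed point, together with the increments `gdim`, determine
the conjugacy class of the affine permutation `g`. -/
theorem isConj_of_data_eq {F V : Type*} [Field F] [Fintype F] [AddCommGroup V] [Module F V]
    [Fintype V] [DecidableEq V] (p : ℕ) [CharP F p] [Fact p.Prime]
    (g g' : Equiv.Perm V) (A A' : Module.End F V) (b b' : V) (h : ∀ x, g x = A x + b)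
    (h' : ∀ x, g' x = A' x + b') (hfix : fixExp p g = fixExp p g')
    (hg : ∀ i ∈ Iset p (Fintype.card F) (Module.finrank F V),
      gdim A p i.1 i.2 = gdim A' p i.1 i.2) : IsConj g g' := by
  have hp : p.Prime := Fact.out
  apply isConj_of_card_fixed_eq
  intro l hl
  obtain ⟨a, k, hk, rfl⟩ := Nat.exists_eq_pow_mul_and_not_dvd hl.ne' p hp.ne_one
  have hiff : (∃ x, (g ^ (p ^ a * k)) x = x) ↔ ∃ x, (g' ^ (p ^ a * k)) x = x := by
    rw [exists_fixed_iff p g A b h a k hk, exists_fixed_iff p g' A' b' h' a k hk,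
      exists_fixed_iff_fixExp_le p g A b h, exists_fixed_iff_fixExp_le p g' A' b' h', hfix]
  by_cases hx : ∃ x, (g ^ (p ^ a * k)) x = x
  · rw [card_fixed_affine g A b h _ hx, card_fixed_affine g' A' b' h' _ (hiff.mp hx),
      finrank_ker_pow_sub_one A p a k hk, finrank_ker_pow_sub_one A' p a k hk]
    congr 1
    refine Finset.sum_congr rfl fun m hm => ?_
    exact fdim_eq_of_gdim_eq A A' p hg
      (fun hd => hk (hd.trans (Nat.dvd_of_mem_divisors hm))) a
  · have hx' := fun h0 => hx (hiff.mpr h0)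
    rw [Finset.filter_false_of_mem (fun x _ h0 => hx ⟨x, h0⟩),
      Finset.filter_false_of_mem (fun x _ h0 => hx' ⟨x, h0⟩)]

/-! ### Counting conjugacy classes -/

theorem Aq_le {F : Type*} [Field F] [Fintype F] (p : ℕ) [CharP F p] [Fact p.Prime] (n : ℕ) :
    Aq F n ≤ (Fintype.card F * n + 1) *
      (weightSet (fun i : Iset p (Fintype.card F) n =>
        orderOf (Fintype.card F : ZMod i.1.1)) n).card := by
  classical
  set q := Fintype.card F with hq
  set W := weightSet (fun i : Iset p q n => orderOf (q : ZMod i.1.1)) n with hW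
  have hfr : Module.finrank F (Fin n → F) = n := Module.finrank_fin_fun F
  unfold Aq
  have hex : ∀ c : {c : ConjClasses (Equiv.Perm (Fin n → F)) //
      ∃ g : Equiv.Perm (Fin n → F), ConjClasses.mk g = c ∧
        ∃ (A : (Fin n → F) ≃ₗ[F] (Fin n → F)) (b : Fin n → F), ∀ x, g x = A x + b},
      ∃ (g : Equiv.Perm (Fin n → F)) (A : Module.End F (Fin n → F)) (b : Fin n → F),
        ConjClasses.mk g = c.1 ∧ ∀ x, g x = A x + b := by
    rintro ⟨c, g, hg, A, b, h⟩
    exact ⟨g, A.toLinearMap, b, hg, h⟩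
  choose g A b hgc h using hex
  have hmem : ∀ c, (fixExp p (g c), fun i : Iset p q n => gdim (A c) p i.1.1 i.1.2)
      ∈ Finset.range (q * n + 1) ×ˢ W := by
    intro c
    have hsum : ∑ i : Iset p q n, gdim (A c) p i.1.1 i.1.2 ≤ n := by
      rw [Finset.sum_coe_sort (Iset p q n) fun i => gdim (A c) p i.1 i.2]
      exact (sum_gdim_le (A c) p n).trans hfr.le
    rw [Finset.mem_product, Finset.mem_range, Nat.lt_succ_iff, hW, weightSet,
      Finset.mem_filter, Fintype.mem_piFinset]
    refine ⟨(fixExp_le p (g c) (A c) (b c) (h c)).trans (by rw [hfr]), fun i => ?_, hsum⟩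
    rw [Finset.mem_filter, Finset.mem_range, Nat.lt_succ_iff]
    refine ⟨?_, gdim_eq_zero_or_le (A c) p ?_ i.1.2⟩
    · exact (Finset.single_le_sum (f := fun i : Iset p q n => gdim (A c) p i.1.1 i.1.2)
        (fun _ _ => Nat.zero_le _) (Finset.mem_univ i)).trans hsum
    · exact (Finset.mem_filter.mp (Finset.mem_product.mp i.2).1).2.1
  have hinj : Function.Injective fun c =>
      (⟨_, hmem c⟩ : (Finset.range (q * n + 1) ×ˢ W : Finset _)) := by
    intro c c' hcc
    have h1 := congrArg Subtype.val hcc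
    simp only [Prod.mk.injEq] at h1
    obtain ⟨h1, h2⟩ := h1
    apply Subtype.ext
    rw [← hgc c, ← hgc c', ConjClasses.mk_eq_mk_iff_isConj]
    refine isConj_of_data_eq p (g c) (g c') (A c) (A c') (b c) (b c') (h c) (h c') h1 ?_
    rw [hfr]
    intro i hi
    exact congrFun h2 ⟨i, hi⟩
  have := Nat.card_le_card_of_injective _ hinj
  rwa [Nat.card_eq_fintype_card (α := (Finset.range (q * n + 1) ×ˢ W : Finset _)),
    Fintype.card_coe, Finset.card_product, Finset.card_range] at this

/-! ### The divisor bound and the sum over roots of unity -/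

/-- Effective divisor bound `τ(N) ≤ (2/δ)^(2^(1/δ)) N^δ`. In `τ(N) / N^δ = ∏ (a_p + 1) / p^(δ a_p)`
the primes `p ≥ 2^(1/δ)` contribute at most `1`, and each smaller prime at most `2/δ`. -/
theorem card_divisors_le_rpow (δ : ℝ) (hδ : 0 < δ) (hδ1 : δ ≤ 1) (N : ℕ) (hN : N ≠ 0) :
    (N.divisors.card : ℝ) ≤ (2 / δ) ^ ((2 : ℝ) ^ (1 / δ)) * (N : ℝ) ^ δ := by
  set y : ℝ := (2 : ℝ) ^ (1 / δ) with hy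
  have hy0 : 0 < y := Real.rpow_pos_of_pos (by norm_num) _
  have h2δ : 1 ≤ 2 / δ := by rw [le_div_iff₀ hδ]; linarith
  have hNprod : (N : ℝ) ^ δ = ∏ p ∈ N.primeFactors, ((p : ℝ) ^ δ) ^ N.factorization p := by
    conv_lhs => rw [← Nat.prod_factorization_pow_eq_self hN]
    rw [Nat.prod_factorization_eq_prod_primeFactors, Nat.cast_prod,
      ← Real.finsetProd_rpow _ _ (fun i _ => by positivity)]
    refine Finset.prod_congr rfl fun p _ => ?_
    rw [Nat.cast_pow, ← Real.rpow_natCast, ← Real.rpow_mul (by positivity), mul_comm,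
      Real.rpow_mul (by positivity), Real.rpow_natCast]
  have hlocal : ∀ p ∈ N.primeFactors, ((N.factorization p + 1 : ℕ) : ℝ)
      ≤ (if (p : ℝ) < y then 2 / δ else 1) * ((p : ℝ) ^ δ) ^ N.factorization p := by
    intro p hp
    set a := N.factorization p
    have hp2 : (2 : ℝ) ≤ p := by exact_mod_cast (Nat.prime_of_mem_primeFactors hp).two_le
    push_cast
    split_ifs with hlt
    · have h1 : Real.exp (δ * a * Real.log 2) ≤ ((p : ℝ) ^ δ) ^ a := by
        have : ((2 : ℝ) ^ δ) ^ a ≤ ((p : ℝ) ^ δ) ^ a := by gcongr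
        refine le_trans (le_of_eq ?_) this
        rw [Real.rpow_def_of_pos (by norm_num), ← Real.exp_nat_mul]
        congr 1; ring
      have h2 := Real.add_one_le_exp (δ * a * Real.log 2)
      have h3 : (1 : ℝ) / 2 ≤ Real.log 2 := by linarith [Real.log_two_gt_d9]
      have h4 : δ * a * (1 / 2) ≤ δ * a * Real.log 2 := by gcongr
      calc (a : ℝ) + 1 ≤ 2 / δ + a := by linarith
        _ = 2 / δ * (1 + δ * a * (1 / 2)) := by field_simp
        _ ≤ _ := by
          gcongr
          linarith
    · rw [one_mul]
      have h1 : (2 : ℝ) ≤ (p : ℝ) ^ δ := calc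
        (2 : ℝ) = y ^ δ := by
          rw [hy, ← Real.rpow_mul (by norm_num), one_div_mul_cancel hδ.ne', Real.rpow_one]
        _ ≤ _ := by
          gcongr
          exact not_lt.mp hlt
      calc (a : ℝ) + 1 ≤ (2 : ℝ) ^ a := by exact_mod_cast Nat.lt_two_pow_self
        _ ≤ _ := by gcongr
  rw [Nat.card_divisors hN, Nat.cast_prod, hNprod]
  refine (Finset.prod_le_prod (fun _ _ => by positivity) hlocal).trans ?_
  rw [Finset.prod_mul_distrib]
  gcongr
  rw [Finset.prod_ite, Finset.prod_const, Finset.prod_const_one, mul_one, ← Real.rpow_natCast]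
  apply Real.rpow_le_rpow_of_exponent_le h2δ
  have hsub : (N.primeFactors.filter fun p : ℕ => (p : ℝ) < y) ⊆ Finset.Ico 1 ⌈y⌉₊ := by
    intro p hp
    rw [Finset.mem_filter] at hp
    rw [Finset.mem_Ico, Nat.lt_ceil]
    exact ⟨(Nat.prime_of_mem_primeFactors hp.1).pos, hp.2⟩
  have h1 := Finset.card_le_card hsub
  rw [Nat.card_Ico] at h1
  have h2 : ((⌈y⌉₊ - 1 : ℕ) : ℝ) ≤ y := by
    have h3 := Nat.ceil_lt_add_one hy0.le
    have h4 : 1 ≤ ⌈y⌉₊ := Nat.one_le_ceil_iff.mpr hy0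
    rw [Nat.cast_sub h4]
    push_cast
    linarith
  exact (Nat.cast_le.mpr h1).trans h2

/-- The sum is grouped by the multiplicative order `d` of `q` mod `m`; each class consists of divisors
of `q^d - 1`, and half of the decay `e^(-t d)` absorbs the factor `q^(δ d) = e^(t d / 2)` coming from
the divisor bound. -/
theorem sum_Mset_le {F : Type*} [Field F] [Fintype F] (p : ℕ) [CharP F p] [Fact p.Prime] (n : ℕ)
    (t δ : ℝ) (hδ : 0 < δ) (hδ1 : δ ≤ 1) (htδ : t = 2 * δ * Real.log (Fintype.card F)) :
    ∑ m ∈ Mset p (Fintype.card F) n,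
        Real.exp (-t * (orderOf (Fintype.card F : ZMod m) : ℕ))
      ≤ (1 + 2 / t) * (2 / δ) ^ ((2 : ℝ) ^ (1 / δ)) := by
  set q := Fintype.card F with hq
  have hq1 : 1 < q := Fintype.one_lt_card
  have hlq : 0 < Real.log q := Real.log_pos (by exact_mod_cast hq1)
  have ht : 0 < t := by rw [htδ]; positivity
  set K := (2 / δ) ^ ((2 : ℝ) ^ (1 / δ)) with hK
  have hK0 : 0 < K := by positivity
  have hmem : ∀ m ∈ Mset p q n, ¬ p ∣ m ∧ orderOf (q : ZMod m) ≤ n :=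
    fun m hm => (Finset.mem_filter.mp hm).2
  rw [← Finset.sum_fiberwise_of_maps_to (t := Finset.Icc 1 n)
    (g := fun m : ℕ => orderOf (q : ZMod m))]
  swap
  · intro m hm
    exact Finset.mem_Icc.mpr ⟨(dvd_pow_orderOf_sub_one (F := F) p (hmem m hm).1).1, (hmem m hm).2⟩
  have hfiber : ∀ d ∈ Finset.Icc 1 n,
      ∑ m ∈ Mset p q n with orderOf (q : ZMod m) = d, Real.exp (-t * (orderOf (q : ZMod m) : ℕ))
        ≤ K * Real.exp (-(t / 2)) ^ d := by
    intro d hd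
    have hd1 : 1 ≤ d := (Finset.mem_Icc.mp hd).1
    have hne : q ^ d - 1 ≠ 0 := by
      have := Nat.one_lt_pow (by omega : d ≠ 0) hq1
      omega
    have hsub : ((Mset p q n).filter fun m => orderOf (q : ZMod m) = d) ⊆ (q ^ d - 1).divisors := by
      intro m hm
      obtain ⟨hmM, hmd⟩ := Finset.mem_filter.mp hm
      have hdvd := (dvd_pow_orderOf_sub_one (F := F) p (hmem m hmM).1).2
      rw [hmd] at hdvd
      exact Nat.mem_divisors.mpr ⟨hdvd, hne⟩
    have hpow : ((q ^ d - 1 : ℕ) : ℝ) ^ δ ≤ Real.exp (t / 2 * d) := calc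
      ((q ^ d - 1 : ℕ) : ℝ) ^ δ ≤ ((q ^ d : ℕ) : ℝ) ^ δ := by
        gcongr
        exact Nat.sub_le _ _
      _ = _ := by
        rw [Nat.cast_pow, ← Real.rpow_natCast, ← Real.rpow_mul (by positivity),
          Real.rpow_def_of_pos (by exact_mod_cast (by omega : 0 < q)), htδ]
        congr 1; ring
    calc _ = ∑ m ∈ Mset p q n with orderOf (q : ZMod m) = d, Real.exp (-t * d) := by
          refine Finset.sum_congr rfl fun m hm => ?_
          rw [(Finset.mem_filter.mp hm).2]
      _ = ((Mset p q n).filter fun m => orderOf (q : ZMod m) = d).card * Real.exp (-t * d) := by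
          rw [Finset.sum_const, nsmul_eq_mul]
      _ ≤ ((q ^ d - 1).divisors.card : ℝ) * Real.exp (-t * d) := by
          gcongr
      _ ≤ (K * ((q ^ d - 1 : ℕ) : ℝ) ^ δ) * Real.exp (-t * d) := by
          gcongr
          exact card_divisors_le_rpow δ hδ hδ1 _ hne
      _ ≤ (K * Real.exp (t / 2 * d)) * Real.exp (-t * d) := by gcongr
      _ = _ := by
          rw [mul_assoc, ← Real.exp_add, ← Real.exp_nat_mul]
          congr 2; ring
  refine (Finset.sum_le_sum hfiber).trans ?_
  have hx1 : Real.exp (-(t / 2)) < 1 := by rw [Real.exp_lt_one_iff]; linarith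
  have hgeom : ∑ d ∈ Finset.Icc 1 n, Real.exp (-(t / 2)) ^ d ≤ 1 + 2 / t := by
    have h1 : Finset.Icc 1 n = Finset.Ico 1 (n + 1) := by ext; simp
    rw [h1]
    refine (geom_sum_Ico_le_of_lt_one (Real.exp_pos _).le hx1).trans ?_
    have h2 := one_div_one_sub_exp_le (t / 2) (by positivity)
    rw [one_div_div] at h2
    refine le_trans ?_ h2
    rw [pow_one]
    have : 0 < 1 - Real.exp (-(t / 2)) := by linarith
    gcongr
  rw [← Finset.mul_sum, mul_comm]
  gcongr

theorem Aq_le_exp {F : Type*} [Field F] [Fintype F] (n : ℕ)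
    (t δ : ℝ) (hδ : 0 < δ) (hδ1 : δ ≤ 1) (htδ : t = 2 * δ * Real.log (Fintype.card F)) :
    (Aq F n : ℝ) ≤ (Fintype.card F * n + 1) * Real.exp (t * n +
      (Nat.log 2 n + 2) * ((1 + 1 / t) * ((1 + 2 / t) * (2 / δ) ^ ((2 : ℝ) ^ (1 / δ))))) := by
  set p := ringChar F with hp
  have : Fact p.Prime := ⟨CharP.char_is_prime F p⟩
  set q := Fintype.card F with hq
  have hq1 : 1 < q := Fintype.one_lt_card
  have hlq : 0 < Real.log q := Real.log_pos (by exact_mod_cast hq1)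
  have ht : 0 < t := by rw [htδ]; positivity
  have h1 : (Aq F n : ℝ) ≤ (q * n + 1 : ℕ) * ((weightSet (fun i : Iset p q n =>
        orderOf (q : ZMod i.1.1)) n).card : ℝ) := by exact_mod_cast Aq_le (F := F) p n
  refine h1.trans ?_
  push_cast
  gcongr
  refine (card_weightSet_le _ n t ht).trans ?_
  gcongr
  rw [Finset.sum_coe_sort (Iset p q n)
    fun i => (1 + 1 / t) * Real.exp (-t * (orderOf (q : ZMod i.1) : ℕ)), Iset,
    Finset.sum_product_right]
  change ∑ _y ∈ Finset.range (Nat.log 2 n + 2), ∑ x ∈ Mset p q n,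
    (1 + 1 / t) * Real.exp (-t * (orderOf (q : ZMod x) : ℕ)) ≤ _
  rw [Finset.sum_const, Finset.card_range, nsmul_eq_mul, ← Finset.mul_sum]
  push_cast
  gcongr
  exact sum_Mset_le (F := F) p n t δ hδ hδ1 htδ

/-! ### Asymptotics -/

theorem eventually_mul_pow_le_exp (D : ℝ) (hD : 0 < D) (k : ℕ) :
    ∀ᶠ y : ℝ in atTop, D * y ^ k ≤ Real.exp (y / 2) := by
  have h := (isLittleO_pow_exp_pos_mul_atTop (k := k) (b := 1 / 2) (by norm_num)).def
    (c := 1 / D) (by positivity)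
  filter_upwards [h] with y hy
  rw [Real.norm_eq_abs, Real.norm_eq_abs, Real.abs_exp] at hy
  have h2 := (le_abs_self _).trans hy
  rw [one_div, ← div_eq_inv_mul, le_div_iff₀ hD] at h2
  calc D * y ^ k = y ^ k * D := mul_comm _ _
    _ ≤ _ := h2
    _ = _ := by congr 1; ring

/-- With `s = log log n`, so that `n = exp (exp s)`: the second term of the exponent in `Aq_le_exp`
for `t = c / s` and `δ = 2 log 2 / s` is at most `n / s`. -/
theorem eventually_error_le (c : ℝ) (hc : 0 < c) :
    ∀ᶠ s : ℝ in atTop, s * ((2 * Real.exp s + 2) * ((1 + s / c) * ((1 + 2 * s / c) *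
      (s / Real.log 2) ^ Real.exp (s / 2)))) ≤ Real.exp (Real.exp s) := by
  have hD : 0 < 4 * (1 + 1 / c) * (1 + 2 / c) := by positivity
  filter_upwards [eventually_mul_pow_le_exp 4 (by norm_num) 1,
    Real.tendsto_exp_atTop.eventually
      (eventually_mul_pow_le_exp (4 * (1 + 1 / c) * (1 + 2 / c)) hD 4),
    eventually_ge_atTop 1] with s h1 h2 hs
  have hl2 : (1 : ℝ) / 2 ≤ Real.log 2 := by linarith [Real.log_two_gt_d9]
  have hse : s ≤ Real.exp s := by linarith [Real.add_one_le_exp s]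
  have he1 : 1 ≤ Real.exp s := Real.one_le_exp (by linarith)
  have hpos : 0 < s / Real.log 2 := by positivity
  have hlog : Real.log (s / Real.log 2) ≤ Real.exp (s / 2) / 2 := by
    have h3 := Real.log_le_sub_one_of_pos hpos
    have h4 : s / Real.log 2 ≤ 2 * s := by
      rw [div_le_iff₀ (by linarith)]
      nlinarith
    rw [pow_one] at h1
    linarith
  have hK : (s / Real.log 2) ^ Real.exp (s / 2) ≤ Real.exp (Real.exp s / 2) := by
    rw [Real.rpow_def_of_pos hpos]
    apply Real.exp_le_exp.mpr
    have h5 : Real.exp s = Real.exp (s / 2) * Real.exp (s / 2) := by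
      rw [← Real.exp_add]; congr 1; ring
    rw [h5]
    nlinarith [Real.exp_pos (s / 2)]
  set y := Real.exp s
  have ha : 1 + s / c ≤ (1 + 1 / c) * y := by
    have : s / c ≤ 1 / c * y := by rw [div_mul_eq_mul_div, one_mul]; gcongr
    linarith
  have hb : 1 + 2 * s / c ≤ (1 + 2 / c) * y := by
    have : 2 * s / c ≤ 2 / c * y := by rw [div_mul_eq_mul_div]; gcongr
    linarith
  calc _ ≤ y * ((4 * y) * (((1 + 1 / c) * y) * (((1 + 2 / c) * y) * Real.exp (y / 2)))) := by
        gcongr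
        linarith
    _ = (4 * (1 + 1 / c) * (1 + 2 / c) * y ^ 4) * Real.exp (y / 2) := by ring
    _ ≤ Real.exp (y / 2) * Real.exp (y / 2) := by gcongr
    _ = Real.exp y := by rw [← Real.exp_add]; congr 1; ring

theorem eventually_linear_le (q : ℝ) (hq : 0 < q) :
    ∀ᶠ x : ℝ in atTop, q * x + 1 ≤ Real.exp (x / Real.log (Real.log x)) := by
  have hs : Tendsto (fun x => Real.log (Real.log x)) atTop atTop :=
    Real.tendsto_log_atTop.comp Real.tendsto_log_atTop
  filter_upwards [Real.tendsto_sqrt_atTop.eventually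
    (eventually_mul_pow_le_exp (q + 1) (by linarith) 2), eventually_ge_atTop 1,
    hs.eventually_ge_atTop 1, Real.tendsto_log_atTop.eventually_ge_atTop 1] with x h1 hx hs1 hl1
  have hr : 0 < √x := Real.sqrt_pos.mpr (by linarith)
  have hsq : √x ^ 2 = x := Real.sq_sqrt (by linarith)
  rw [hsq] at h1
  have hsx : Real.log (Real.log x) ≤ 2 * √x := by
    have h2 := Real.log_le_sub_one_of_pos (by linarith : 0 < Real.log x)
    have h3 := Real.log_le_sub_one_of_pos hr
    rw [Real.log_sqrt (by linarith)] at h3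
    linarith
  calc q * x + 1 ≤ (q + 1) * x := by linarith
    _ ≤ Real.exp (√x / 2) := h1
    _ ≤ _ := by
      apply Real.exp_le_exp.mpr
      rw [div_le_div_iff₀ (by norm_num) (by linarith)]
      nlinarith

/-- `A_q(n) ≤ exp(C n / log log n)` for large `n`. -/
theorem stmt2 (F : Type*) [Field F] [Fintype F] :
    ∃ C : ℝ, 0 < C ∧ ∀ᶠ n : ℕ in atTop,
      (Aq F n : ℝ) ≤ Real.exp (C * n / Real.log (Real.log n)) := by
  have hq1 : 1 < Fintype.card F := Fintype.one_lt_card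
  have hlq : 0 < Real.log (Fintype.card F) := Real.log_pos (by exact_mod_cast hq1)
  have hl2 : 0 < Real.log 2 := Real.log_pos (by norm_num)
  set q := Fintype.card F
  set c : ℝ := 4 * Real.log 2 * Real.log q with hc
  have hc0 : 0 < c := by positivity
  have hs : Tendsto (fun x => Real.log (Real.log x)) atTop atTop :=
    Real.tendsto_log_atTop.comp Real.tendsto_log_atTop
  refine ⟨c + 2, by positivity, ?_⟩
  have key : ∀ᶠ x : ℝ in atTop, 1 ≤ x ∧ 2 ≤ Real.log (Real.log x) ∧ 1 ≤ Real.log x ∧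
      q * x + 1 ≤ Real.exp (x / Real.log (Real.log x)) ∧
      (fun s : ℝ => s * ((2 * Real.exp s + 2) * ((1 + s / c) * ((1 + 2 * s / c) *
      (s / Real.log 2) ^ Real.exp (s / 2)))) ≤ Real.exp (Real.exp s)) (Real.log (Real.log x)) := by
    filter_upwards [eventually_ge_atTop 1, hs.eventually_ge_atTop 2,
      Real.tendsto_log_atTop.eventually_ge_atTop 1,
      eventually_linear_le q (by exact_mod_cast (by omega : 0 < q)),
      hs.eventually (eventually_error_le c hc0)] with x h1 h2 h3 h4 h5
    exact ⟨h1, h2, h3, h4, h5⟩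
  filter_upwards [tendsto_natCast_atTop_atTop.eventually key] with n ⟨hn1, hs2, hl1, hlin, herr⟩
  set s := Real.log (Real.log n) with hsdef
  have hs0 : 0 < s := by linarith
  have hes : Real.exp s = Real.log n := Real.exp_log (by linarith)
  have hees : Real.exp (Real.exp s) = n := by rw [hes, Real.exp_log (by linarith)]
  have hδ1 : 2 * Real.log 2 / s ≤ 1 := by
    rw [div_le_one hs0]
    linarith [Real.log_two_lt_d9]
  -- The constant `c` is chosen so that `2^(1/δ) = exp (s/2) = √(log n)`, which keeps the divisor-bound
  -- factor `(2/δ)^(2^(1/δ))` below a power of `n` smaller than one.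
  have hmain := Aq_le_exp (F := F) n (c / s) (2 * Real.log 2 / s) (by positivity) hδ1
    (by rw [hc]; ring)
  have e1 : (2 : ℝ) ^ (1 / (2 * Real.log 2 / s)) = Real.exp (s / 2) := by
    rw [Real.rpow_def_of_pos (by norm_num)]
    congr 1
    field_simp
  have e2 : 2 / (2 * Real.log 2 / s) = s / Real.log 2 := by field_simp
  have e3 : 1 / (c / s) = s / c := by field_simp
  have e4 : 2 / (c / s) = 2 * s / c := by field_simp
  have hlog2 : (Nat.log 2 n : ℝ) ≤ 2 * Real.exp s := by
    have h1 : (2 : ℝ) ^ Nat.log 2 n ≤ n := by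
      have hn0 : n ≠ 0 := by rintro rfl; norm_num at hn1
      exact_mod_cast Nat.pow_log_le_self 2 hn0
    have h2 := Real.log_le_log (by positivity) h1
    rw [Real.log_pow] at h2
    rw [hes]
    have h3 : (1 : ℝ) / 2 ≤ Real.log 2 := by linarith [Real.log_two_gt_d9]
    have h4 : (Nat.log 2 n : ℝ) * (1 / 2) ≤ Nat.log 2 n * Real.log 2 := by gcongr
    linarith
  rw [e1, e2, e3, e4] at hmain
  refine hmain.trans ?_
  have hb : (Nat.log 2 n + 2 : ℝ) * ((1 + s / c) * ((1 + 2 * s / c) *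
      (s / Real.log 2) ^ Real.exp (s / 2))) ≤ n / s := by
    rw [le_div_iff₀ hs0, mul_comm, ← hees]
    refine le_trans ?_ herr
    gcongr
  calc _ ≤ Real.exp (n / s) * Real.exp (c / s * n + n / s) := by
        gcongr
    _ = _ := by rw [← Real.exp_add]; congr 1; ring
end

section
/- Fix a prime power q. Let A_q(n) be the number of conjugacy classes of the symmetric group on the set (F_q)^n that contain at least one invertible affine-linear transformation of (F_q)^n, and let P denote the integer partition function, so that P(q^n) is the total number of conjugacy classes of Sym((F_q)^n). Then A_q(n)/P(q^n) → 0 as n → ∞. -/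
/-!
An affine map is determined by its linear part and its translation vector, so choosing an affine
representative in each class gives `Aq F n ≤ q ^ (n ^ 2 + n)` (`Aq_le`), where `q = |F|`.
On the other hand the partition function grows faster than that along `m = q ^ n`: every subset of
`{2, …, k + 1}` whose sum is at most `m` can be completed to a partition of `m` by adding ones, and
it is recovered as the set of parts different from `1`. Hence `2 ^ k ≤ P(m)` as soon as
`k (k + 1) ≤ m` (`two_pow_le_card_partition`). For `k = n ^ 4` the condition `k (k + 1) ≤ q ^ n`
holds for large `n`, while `2 ^ (n ^ 4) ≥ 2 ^ n * q ^ (n ^ 2 + n)`, so the ratio is at most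
`2 ^ (-n)` eventually.
-/

open Polynomial Filter

/-- A class meeting the affine group is determined by the matrix and the translation vector of any
affine map in it. -/
theorem Aq_le_s3 (F : Type*) [Field F] [Fintype F] (n : ℕ) :
    Aq F n ≤ Fintype.card F ^ (n * n + n) := by
  classical
  unfold Aq
  have hcard : Nat.card (Matrix (Fin n) (Fin n) F × (Fin n → F))
      = Fintype.card F ^ (n * n + n) := by
    rw [Nat.card_prod, pow_add, pow_mul]
    simp [Matrix, Nat.card_eq_fintype_card]
  rw [← hcard]
  let S := {c : ConjClasses (Equiv.Perm (Fin n → F)) //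
    ∃ g : Equiv.Perm (Fin n → F), ConjClasses.mk g = c ∧
      ∃ (A : (Fin n → F) ≃ₗ[F] (Fin n → F)) (b : Fin n → F), ∀ x, g x = A x + b}
  have h : ∀ c : S, ∃ g : Equiv.Perm (Fin n → F), ConjClasses.mk g = c.1 ∧
      ∃ (A : (Fin n → F) ≃ₗ[F] (Fin n → F)) (b : Fin n → F), ∀ x, g x = A x + b := fun c => c.2
  choose g hg A b hA using h
  refine Nat.card_le_card_of_injective
    (fun c : S => (LinearMap.toMatrix' (A c).toLinearMap, b c)) ?_
  intro c d hcd
  obtain ⟨h1, h2⟩ := Prod.mk.inj hcd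
  have h3 := LinearMap.toMatrix'.injective h1
  have hgg : g c = g d := by
    ext1 x
    have h4 : A c x = A d x := LinearMap.congr_fun h3 x
    rw [hA, hA, h4, h2]
  exact Subtype.ext (by rw [← hg c, ← hg d, hgg])

/-- Subsets of `{2, …, k + 1}` inject into the partitions of `m`, by padding with ones. -/
theorem two_pow_le_card_partition {k m : ℕ} (h : k * (k + 1) ≤ m) :
    2 ^ k ≤ Nat.card (Nat.Partition m) := by
  classical
  have hcard : Nat.card (Finset.Icc 2 (k + 1)).powerset = 2 ^ k := by
    rw [Nat.card_eq_fintype_card, Fintype.card_coe, Finset.card_powerset, Nat.card_Icc]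
    rfl
  rw [← hcard]
  have hsum : ∀ S : (Finset.Icc 2 (k + 1)).powerset, S.1.sum id ≤ m := fun S => by
    have hS := Finset.mem_powerset.1 S.2
    calc S.1.sum id ≤ (Finset.Icc 2 (k + 1)).sum id :=
          Finset.sum_le_sum_of_subset hS
      _ ≤ (Finset.Icc 2 (k + 1)).card • (k + 1) :=
          Finset.sum_le_card_nsmul _ _ _ fun x hx => (Finset.mem_Icc.1 hx).2
      _ ≤ m := by simpa using h
  have hval : ∀ S : (Finset.Icc 2 (k + 1)).powerset, S.1.val.sum = S.1.sum id := fun S => by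
    rw [Finset.sum, Multiset.map_id]
  let f : (Finset.Icc 2 (k + 1)).powerset → Nat.Partition m := fun S =>
    { parts := S.1.val + Multiset.replicate (m - S.1.sum id) 1
      parts_pos := by
        intro i hi
        rcases Multiset.mem_add.1 hi with hi | hi
        · have := Finset.mem_Icc.1 (Finset.mem_powerset.1 S.2 hi)
          omega
        · rw [Multiset.eq_of_mem_replicate hi]
          exact one_pos
      parts_sum := by
        rw [Multiset.sum_add, hval, Multiset.sum_replicate, smul_eq_mul, mul_one]
        have := hsum S
        omega }
  have hf : ∀ S x, x ∈ S.1 ↔ x ∈ (f S).parts ∧ x ≠ 1 := by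
    intro S x
    constructor
    · intro hx
      have := Finset.mem_Icc.1 (Finset.mem_powerset.1 S.2 hx)
      exact ⟨Multiset.mem_add.2 (Or.inl hx), by omega⟩
    · rintro ⟨hx, h1⟩
      rcases Multiset.mem_add.1 hx with hx | hx
      · exact hx
      · exact absurd (Multiset.eq_of_mem_replicate hx) h1
  refine Nat.card_le_card_of_injective f fun S T hST => ?_
  ext x
  rw [hf S, hf T, hST]

theorem eventually_poly_le_two_pow :
    ∀ᶠ n : ℕ in atTop, n ^ 4 * (n ^ 4 + 1) ≤ 2 ^ n := by
  have h1 := tendsto_pow_const_div_const_pow_of_one_lt 9 (one_lt_two (α := ℝ))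
  filter_upwards [h1.eventually_lt_const one_pos, eventually_ge_atTop 2] with n hn h2
  rw [div_lt_one (by positivity)] at hn
  have hn' : n ^ 9 < 2 ^ n := by exact_mod_cast hn
  have h3 : n ^ 4 * (n ^ 4 + 1) ≤ n ^ 9 := by
    have h4 : 1 ≤ n ^ 4 := Nat.one_le_pow _ _ (by omega)
    calc n ^ 4 * (n ^ 4 + 1) ≤ n ^ 4 * (n ^ 4 * n) := by
          gcongr
          nlinarith
      _ = n ^ 9 := by ring
  omega

/-- The proportion `A_q(n) / P(q^n)` of conjugacy classes of `Sym((F_q)^n)` meeting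
the affine group tends to `0` (here `P(m) = Nat.card (Nat.Partition m)` is the
partition function, the number of conjugacy classes of `S_m`). -/
theorem stmt3 (F : Type*) [Field F] [Fintype F] :
    Tendsto (fun n : ℕ =>
        (Aq F n : ℝ) / (Nat.card (Nat.Partition (Fintype.card F ^ n)) : ℝ))
      atTop (nhds 0) := by
  have hev : ∀ᶠ n : ℕ in atTop,
      (Aq F n : ℝ) / (Nat.card (Nat.Partition (Fintype.card F ^ n)) : ℝ) ≤ (1 / 2) ^ n := by
    filter_upwards [eventually_poly_le_two_pow, eventually_ge_atTop 2,
      eventually_ge_atTop (Fintype.card F)] with n hn h2 hq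
    set q := Fintype.card F
    have hq2 : 2 ≤ q := Fintype.one_lt_card
    have hP : 2 ^ n ^ 4 ≤ Nat.card (Nat.Partition (q ^ n)) :=
      two_pow_le_card_partition (hn.trans (Nat.pow_le_pow_left hq2 n))
    have hA : Aq F n * 2 ^ n ≤ 2 ^ n ^ 4 := by
      -- uses `q ≤ n ≤ 2 ^ n`, and `n ^ 3 + n ^ 2 + n ≤ n ^ 4`
      calc Aq F n * 2 ^ n ≤ q ^ (n * n + n) * 2 ^ n := Nat.mul_le_mul_right _ (Aq_le_s3 F n)
        _ ≤ (2 ^ n) ^ (n * n + n) * 2 ^ n := by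
            gcongr
            exact hq.trans Nat.lt_two_pow_self.le
        _ = 2 ^ (n * (n * n + n) + n) := by rw [← pow_mul, ← pow_add]
        _ ≤ 2 ^ n ^ 4 := by
            refine Nat.pow_le_pow_right two_pos ?_
            have e1 : 2 * n ≤ n * n := Nat.mul_le_mul_right n h2
            have e2 : 2 * (n * n) ≤ n * (n * n) := Nat.mul_le_mul_right (n * n) h2
            have e3 : 2 * (n * (n * n)) ≤ n ^ 4 := by
              calc 2 * (n * (n * n)) ≤ n * (n * (n * n)) := Nat.mul_le_mul_right _ h2
                _ = n ^ 4 := by ring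
            rw [mul_add]
            omega
    have hR : (Aq F n : ℝ) * 2 ^ n ≤ Nat.card (Nat.Partition (q ^ n)) := by
      exact_mod_cast hA.trans hP
    have hpos : (0 : ℝ) < Nat.card (Nat.Partition (q ^ n)) := by
      exact_mod_cast lt_of_lt_of_le (by positivity) hP
    rw [div_le_iff₀ hpos, one_div, inv_pow, inv_mul_eq_div, le_div_iff₀ (by positivity)]
    exact hR
  exact tendsto_of_tendsto_of_tendsto_of_le_of_le' tendsto_const_nhds
    (tendsto_pow_atTop_nhds_zero_of_lt_one (by norm_num) (by norm_num))
    (Eventually.of_forall fun n => by positivity) hev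
end

section
/- Fix a prime power q and a positive integer k. Let O_q(k) be the number of positive integers that occur as ord f for some monic irreducible polynomial f of degree k over F_q with f(0) ≠ 0. Then O_q(k) = Σ_{d | k} τ(q^d − 1)·μ(k/d), where τ(m) is the number of positive divisors of m and μ is the Möbius function. -/
/-!
The order of an irreducible `f` with `f(0) ≠ 0` is the multiplicative order of a root of `f`
(`polyOrder_eq_orderOf`), so `f ∣ X ^ m - 1` exactly when `ord f ∣ m`. On the other hand
`f ∣ X ^ (q ^ n) - X` exactly when `deg f ∣ n`. Together these give the key equivalence
`deg f ∣ n ↔ ord f ∣ q ^ n - 1` (`natDegree_dvd_iff_polyOrder_dvd`). In particular `ord f`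
determines `deg f`, so the sets of orders arising in distinct degrees are disjoint.

Conversely every divisor `e` of `q ^ n - 1` is prime to the characteristic, and is the order of any
irreducible factor of the cyclotomic polynomial `Φ_e` over `F` (`exists_polyOrder_eq`). Hence the
divisors of `q ^ n - 1` are the disjoint union over `d ∣ n` of the orders arising in degree `d`,
that is `∑_{d ∣ n} O_q(d) = τ(q ^ n - 1)`, and Möbius inversion concludes.
-/

open Polynomial

/-- The order of a polynomial `f` (with `f(0) ≠ 0`): the least positive `e` with
`f ∣ X^e - 1`. -/
noncomputable def polyOrder {F : Type*} [Field F] (f : F[X]) : ℕ :=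
  sInf {e : ℕ | 0 < e ∧ f ∣ X ^ e - 1}

/-- `Oq F k` is the number of positive integers occurring as `ord f` for some monic
irreducible polynomial `f` of degree `k` over `F` with `f(0) ≠ 0`. -/
noncomputable def Oq (F : Type*) [Field F] (k : ℕ) : ℕ :=
  Nat.card {e : ℕ | ∃ f : F[X],
    f.Monic ∧ Irreducible f ∧ f.natDegree = k ∧ f.coeff 0 ≠ 0 ∧ polyOrder f = e}

section

variable {F : Type*} [Field F]

/-- The set of orders of the monic irreducible polynomials of degree `k` with nonzero constant
term; `Oq F k` is its cardinality. -/
def orderSet (F : Type*) [Field F] (k : ℕ) : Set ℕ :=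
  {e : ℕ | ∃ f : F[X],
    f.Monic ∧ Irreducible f ∧ f.natDegree = k ∧ f.coeff 0 ≠ 0 ∧ polyOrder f = e}

lemma dvd_X_pow_sub_one_iff (f : F[X]) (m : ℕ) :
    f ∣ X ^ m - 1 ↔ orderOf (AdjoinRoot.root f) ∣ m := by
  rw [orderOf_dvd_iff_pow_eq_one, ← AdjoinRoot.mk_eq_zero]
  simp [sub_eq_zero]

/-- The two notions of order agree, without assuming that the root has finite order: if it does
not, then both sides are `0`. -/
lemma polyOrder_eq_orderOf (f : F[X]) : polyOrder f = orderOf (AdjoinRoot.root f) := by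
  unfold polyOrder
  simp_rw [dvd_X_pow_sub_one_iff]
  rcases Nat.eq_zero_or_pos (orderOf (AdjoinRoot.root f)) with h | h
  · have : {e : ℕ | 0 < e ∧ orderOf (AdjoinRoot.root f) ∣ e} = ∅ := by
      refine Set.eq_empty_of_forall_notMem fun e he => he.1.ne' ?_
      exact zero_dvd_iff.mp (h ▸ he.2)
    rw [this, h, Nat.sInf_empty]
  · apply le_antisymm
    · exact Nat.sInf_le ⟨h, dvd_rfl⟩
    · exact le_csInf ⟨_, h, dvd_rfl⟩ fun e he => Nat.le_of_dvd he.1 he.2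

variable [Fintype F]

/-- Both sides say that the roots of `f` lie in the extension of `F` of degree `n`. The case `n = 0`
is degenerate: both sides hold, since everything divides `0`. -/
lemma natDegree_dvd_iff_polyOrder_dvd {f : F[X]} (hf : Irreducible f) (h0 : f.coeff 0 ≠ 0)
    (n : ℕ) : f.natDegree ∣ n ↔ polyOrder f ∣ Fintype.card F ^ n - 1 := by
  rw [polyOrder_eq_orderOf, ← dvd_X_pow_sub_one_iff,
    hf.natDegree_dvd_iff_dvd_X_pow_card_pow_sub_X, Nat.card_eq_fintype_card]
  have hpos : 0 < Fintype.card F ^ n := pow_pos Fintype.card_pos n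
  have hX : (X ^ Fintype.card F ^ n - X : F[X]) = X * (X ^ (Fintype.card F ^ n - 1) - 1) := by
    rw [mul_sub, mul_one, ← pow_succ', Nat.sub_add_cancel hpos]
  have hcop : IsCoprime f X := by
    rw [hf.coprime_iff_not_dvd]
    intro h
    -- `X` is irreducible, hence associated to `f`, against `f(0) ≠ 0`.
    exact h0 (X_dvd_iff.mp ((hf.dvd_symm irreducible_X) h))
  rw [hX]
  exact ⟨hcop.dvd_of_dvd_mul_left, fun h => h.mul_left _⟩

/-- Every divisor `e` of `q ^ n - 1` is an order: an irreducible factor of the cyclotomic polynomial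
`Φ_e` has a primitive `e`-th root of unity as its root, because `e ≠ 0` in `F`. -/
lemma exists_polyOrder_eq {e n : ℕ} (hn : 0 < n) (he : e ∣ Fintype.card F ^ n - 1) :
    ∃ f : F[X], f.Monic ∧ Irreducible f ∧ f.coeff 0 ≠ 0 ∧ polyOrder f = e := by
  have hpos : 0 < Fintype.card F ^ n := pow_pos Fintype.card_pos n
  have heF : (e : F) ≠ 0 := by
    intro h
    -- In `F`, `q ^ n - 1 = -1`, so none of its divisors vanishes.
    obtain ⟨c, hc⟩ := he
    have h1 : ((Fintype.card F ^ n - 1 : ℕ) : F) = 0 := by rw [hc]; simp [h]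
    rw [Nat.cast_sub hpos] at h1
    simp [hn.ne'] at h1
  have he0 : 0 < e := Nat.pos_of_ne_zero fun h => heF (by simp [h])
  have hunit : ¬ IsUnit (cyclotomic e F) := by
    intro h
    have := degree_cyclotomic_pos e F he0
    rw [degree_eq_zero_of_isUnit h] at this
    exact lt_irrefl _ this
  obtain ⟨f, hm, hf, hdvd⟩ := exists_monic_irreducible_factor _ hunit
  refine ⟨f, hm, hf, fun h => ?_, ?_⟩
  · have hX : (X : F[X]) ∣ X ^ e - 1 :=
      (X_dvd_iff.mpr h).trans (hdvd.trans (cyclotomic.dvd_X_pow_sub_one e F))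
    rw [X_dvd_iff] at hX
    simp [coeff_X_pow, he0.ne] at hX
  · have : Fact (Irreducible f) := ⟨hf⟩
    have : NeZero (e : AdjoinRoot f) := ⟨by
      rw [← map_natCast (algebraMap F (AdjoinRoot f))]
      exact (map_ne_zero (algebraMap F (AdjoinRoot f))).mpr heF⟩
    have hroot : (cyclotomic e (AdjoinRoot f)).IsRoot (AdjoinRoot.root f) := by
      rw [← map_cyclotomic e (algebraMap F (AdjoinRoot f)), IsRoot.def, eval_map_algebraMap,
        AdjoinRoot.aeval_eq]
      exact AdjoinRoot.mk_eq_zero.mpr hdvd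
    rw [polyOrder_eq_orderOf]
    exact (isRoot_cyclotomic_iff.mp hroot).eq_orderOf.symm

lemma mem_orderSet_dvd_iff {d e : ℕ} (h : e ∈ orderSet F d) (n : ℕ) :
    d ∣ n ↔ e ∣ Fintype.card F ^ n - 1 := by
  obtain ⟨f, -, hf, rfl, h0, rfl⟩ := h
  exact natDegree_dvd_iff_polyOrder_dvd hf h0 n

lemma orderSet_degree_unique {d d' e : ℕ} (h : e ∈ orderSet F d) (h' : e ∈ orderSet F d') :
    d = d' :=
  Nat.dvd_antisymm
    ((mem_orderSet_dvd_iff h d').mpr ((mem_orderSet_dvd_iff h' d').mp dvd_rfl))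
    ((mem_orderSet_dvd_iff h' d).mpr ((mem_orderSet_dvd_iff h d).mp dvd_rfl))

lemma card_pow_sub_one_ne_zero {n : ℕ} (hn : 0 < n) : Fintype.card F ^ n - 1 ≠ 0 := by
  have := Nat.one_lt_pow hn.ne' (Fintype.one_lt_card (α := F))
  omega

lemma finite_orderSet {d : ℕ} (hd : 0 < d) : (orderSet F d).Finite :=
  (Nat.divisors (Fintype.card F ^ d - 1)).finite_toSet.subset fun _ he =>
    Nat.mem_divisors.mpr ⟨(mem_orderSet_dvd_iff he d).mp dvd_rfl, card_pow_sub_one_ne_zero hd⟩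

lemma coe_divisors_eq_iUnion {n : ℕ} (hn : 0 < n) :
    ((Fintype.card F ^ n - 1).divisors : Set ℕ) = ⋃ d ∈ n.divisors, orderSet F d := by
  ext e
  simp only [Finset.mem_coe, Nat.mem_divisors, Set.mem_iUnion, exists_prop]
  constructor
  · rintro ⟨he, -⟩
    obtain ⟨f, hm, hf, h0, rfl⟩ := exists_polyOrder_eq hn he
    exact ⟨f.natDegree, ⟨(natDegree_dvd_iff_polyOrder_dvd hf h0 n).mpr he, hn.ne'⟩,
      f, hm, hf, rfl, h0, rfl⟩
  · rintro ⟨d, ⟨hd, -⟩, he⟩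
    exact ⟨(mem_orderSet_dvd_iff he n).mp hd, card_pow_sub_one_ne_zero hn⟩

lemma sum_Oq_eq_card_divisors {n : ℕ} (hn : 0 < n) :
    ∑ d ∈ n.divisors, Oq F d = (Fintype.card F ^ n - 1).divisors.card := by
  classical
  have hfin : ∀ d ∈ n.divisors, (orderSet F d).Finite := fun d hd =>
    finite_orderSet (Nat.pos_of_mem_divisors hd)
  rw [← Set.ncard_coe_finset, coe_divisors_eq_iUnion hn]
  have h : (⋃ d ∈ n.divisors, orderSet F d) =
      ((n.divisors.attach.biUnion fun d => (hfin d d.2).toFinset : Finset ℕ) : Set ℕ) := by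
    ext e
    simp
  rw [h, Set.ncard_coe_finset, Finset.card_biUnion, ← Finset.sum_attach]
  · exact Finset.sum_congr rfl fun d _ => Set.ncard_eq_toFinset_card _ (hfin d d.2)
  · intro d _ d' _ hdd
    rw [Function.onFun, Finset.disjoint_left]
    intro e he he'
    rw [Set.Finite.mem_toFinset] at he he'
    exact hdd (Subtype.ext (orderSet_degree_unique he he'))

end

/-- `O_q(k) = ∑_{d ∣ k} τ(q^d - 1) μ(k/d)`. -/
theorem stmt4 (F : Type*) [Field F] [Fintype F] (k : ℕ) (hk : 0 < k) :
    (Oq F k : ℤ) = ∑ d ∈ k.divisors,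
      ((Fintype.card F ^ d - 1).divisors.card : ℤ) * ArithmeticFunction.moebius (k / d) := by
  have key := (ArithmeticFunction.sum_eq_iff_sum_mul_moebius_eq
    (f := fun d => (Oq F d : ℤ))
    (g := fun d => ((Fintype.card F ^ d - 1).divisors.card : ℤ))).mp
    (fun n hn => by exact_mod_cast sum_Oq_eq_card_divisors hn) k hk
  simp only [Int.cast_id] at key
  rw [← key, Nat.sum_divisorsAntidiagonal' (f := fun a b =>
    (ArithmeticFunction.moebius a : ℤ) * ((Fintype.card F ^ b - 1).divisors.card : ℤ))]
  exact Finset.sum_congr rfl fun d _ => mul_comm _ _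
end
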